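/- Suppose f : 𝕊 → ℝ is Lipschitz continuous and μ is an arbitrary absolutely continuous probability measure on 𝕊. Then the function t ↦ μ̂ₜ(f) is continuous on [0,1], and the laws 𝐏ⁿ_μ of the random paths t ↦ ζₙ(x,t) on C⁰([0,1],ℝ) converge weakly, as n → ∞, to the point mass (Dirac measure) at the path ζ ∈ C⁰([0,1],ℝ) given by ζ(t) = ∫₀ᵗ μ̂ₛ(f) ds. In particular the limit is independent of μ. -/

import Mathlib

open MeasureTheory Filter Topology Set UniformConvergence

noncomputable section

instance : Fact ((0:ℝ) < 1) := ⟨zero_lt_one⟩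

/-- The circle `𝕊 = ℝ/ℤ`. -/
abbrev Circle1 : Type := AddCircle (1 : ℝ)

/-- A `C²` expanding circle map with expansion `≥ lam` and `‖T''‖_∞ ≤ Astar`,
encoded by a lift `F : ℝ → ℝ` satisfying `F (x+1) = F x + deg`. -/
structure CM (lam Astar : ℝ) where
  F : ℝ → ℝ
  deg : ℤ
  lift_add_one : ∀ x : ℝ, F (x + 1) = F x + deg
  contDiff : ContDiff ℝ 2 F
  expanding : ∀ x : ℝ, lam ≤ deriv F x
  second_bound : ∀ x : ℝ, |deriv (deriv F) x| ≤ Astar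

namespace CM

variable {lam Astar : ℝ}

/-- The induced map on the circle. -/
def toMap (T : CM lam Astar) : Circle1 → Circle1 :=
  fun x => (↑(T.F ((AddCircle.equivIco 1 0 x : ℝ))) : Circle1)

/-- The derivative of `T`, as a function on the circle. -/
def dmap (T : CM lam Astar) : Circle1 → ℝ :=
  fun x => deriv T.F ((AddCircle.equivIco 1 0 x : ℝ))

end CM

/-- The `C¹` distance on the space of maps. -/
def dC1 {lam Astar : ℝ} (T₁ T₂ : CM lam Astar) : ℝ :=
  (⨆ x : Circle1, dist (T₁.toMap x) (T₂.toMap x)) + (⨆ x : Circle1, |T₁.dmap x - T₂.dmap x|)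

/-- The transfer operator `ℒ_T h (x) = ∑_{T y = x} h y / T' y`. -/
def transfer {lam Astar : ℝ} (T : CM lam Astar) (h : Circle1 → ℝ) : Circle1 → ℝ :=
  fun x => ∑' y : {y : Circle1 // T.toMap y = x}, h y / T.dmap y

/-- Iterated transfer operators `ℒ_k ⋯ ℒ_1` of the sequence `T_1, T_2, …` (`Ts i = T_i`). -/
def transferIter {lam Astar : ℝ} (Ts : ℕ → CM lam Astar) : ℕ → (Circle1 → ℝ) → (Circle1 → ℝ)
  | 0, h => h
  | (k+1), h => transfer (Ts (k+1)) (transferIter Ts k h)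

/-- Composition `T_k ∘ ⋯ ∘ T_1` as circle maps. -/
def mapIter {lam Astar : ℝ} (Ts : ℕ → CM lam Astar) : ℕ → Circle1 → Circle1
  | 0 => id
  | (k+1) => (Ts (k+1)).toMap ∘ mapIter Ts k

/-- Composition of the lifts `F_k ∘ ⋯ ∘ F_1`. -/
def liftIter {lam Astar : ℝ} (Ts : ℕ → CM lam Astar) : ℕ → ℝ → ℝ
  | 0 => id
  | (k+1) => (Ts (k+1)).F ∘ liftIter Ts k

/-- A real representative of `z`. -/
def zrep (z : Circle1) : ℝ := (AddCircle.equivIco 1 0 z : ℝ)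

/-- The coordinate on the cut circle `J_z = 𝕊 ∖ {z}`. -/
def arcCoord (z x : Circle1) : ℝ := ((AddCircle.equivIoc 1 (zrep z) x : ℝ))

/-- `|x − y|_z`: the length of the subarc of `J_z` connecting `x` and `y`. -/
def arcDist (z x y : Circle1) : ℝ := |arcCoord z x - arcCoord z y|

/-- `g` is Lipschitz on `J_z = 𝕊 ∖ {z}` with constant `L`. -/
def LipOnArc (z : Circle1) (L : ℝ) (g : Circle1 → ℝ) : Prop :=
  ∀ x y : Circle1, x ≠ z → y ≠ z → |g x - g y| ≤ L * arcDist z x y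

/-- A probability density w.r.t. the Haar–Lebesgue measure `𝔪` on the circle. -/
def IsProbDensity (ψ : Circle1 → ℝ) : Prop :=
  Integrable ψ volume ∧ (∫ x : Circle1, ψ x) = 1 ∧ ∀ x, 0 ≤ ψ x

/-- The class `𝒟_L`: positive probability densities whose logarithm is Lipschitz
with constant `L` on `J_z` for some `z`. -/
def memD (L : ℝ) (ψ : Circle1 → ℝ) : Prop :=
  IsProbDensity ψ ∧ (∀ x, 0 < ψ x) ∧ ∃ z : Circle1, LipOnArc z L (fun x => Real.log (ψ x))

/-- The `L¹(𝔪)` norm. -/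
def l1norm (h : Circle1 → ℝ) : ℝ := ∫ x : Circle1, |h x|

/-- The supremum norm. -/
def supNorm (h : Circle1 → ℝ) : ℝ := ⨆ x : Circle1, |h x|

/-- The Lipschitz constant of `h` (w.r.t. the metric of the circle). -/
def lipConst (h : Circle1 → ℝ) : ℝ :=
  sInf {L : ℝ | 0 ≤ L ∧ ∀ x y : Circle1, |h x - h y| ≤ L * dist x y}

/-- The Lipschitz norm `‖h‖_Lip = Lip(h) + ‖h‖_∞`. -/
def lipNorm (h : Circle1 → ℝ) : ℝ := lipConst h + supNorm h

/-- `ρ` is the density of the SRB measure of `T`: the density of a `T`-invariant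
probability measure equivalent to `𝔪`. -/
def IsSRBDensity {lam Astar : ℝ} (T : CM lam Astar) (ρ : Circle1 → ℝ) : Prop :=
  IsProbDensity ρ ∧ (∀ᵐ x : Circle1, 0 < ρ x) ∧
    Measure.map T.toMap (volume.withDensity (fun x => ENNReal.ofReal (ρ x))) =
      volume.withDensity (fun x => ENNReal.ofReal (ρ x))

section QDS

variable {lam Astar : ℝ}

/-- `x_{n,k} = T_{n,k} ∘ ⋯ ∘ T_{n,1}` for a triangular array. -/
def arrIter (Tarr : ℕ → ℕ → CM lam Astar) (n : ℕ) : ℕ → Circle1 → Circle1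
  | 0 => id
  | (k+1) => (Tarr n (k+1)).toMap ∘ arrIter Tarr n k

/-- `ℒ_{n,k} ⋯ ℒ_{n,1}` for a triangular array. -/
def arrTransfer (Tarr : ℕ → ℕ → CM lam Astar) (n : ℕ) : ℕ → (Circle1 → ℝ) → (Circle1 → ℝ)
  | 0, h => h
  | (k+1), h => transfer (Tarr n (k+1)) (arrTransfer Tarr n k h)

/-- `f_{n,k} = f ∘ T_{n,k} ∘ ⋯ ∘ T_{n,1}` evaluated at `x`. -/
def fnk (Tarr : ℕ → ℕ → CM lam Astar) (f : Circle1 → ℝ) (n k : ℕ) (x : Circle1) : ℝ :=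
  f (arrIter Tarr n k x)

/-- `ζₙ(x,t) = n⁻¹ (∑_{k<⌊nt⌋} f_{n,k}(x) + {nt}·f_{n,⌊nt⌋}(x))`. -/
def zetaP (Tarr : ℕ → ℕ → CM lam Astar) (f : Circle1 → ℝ) (n : ℕ) (x : Circle1) (t : ℝ) : ℝ :=
  (n : ℝ)⁻¹ * ((∑ k ∈ Finset.range ⌊(n : ℝ) * t⌋₊, fnk Tarr f n k x) +
    Int.fract ((n : ℝ) * t) * fnk Tarr f n ⌊(n : ℝ) * t⌋₊ x)

/-- `ξₙ(x,t) = √n ζₙ(x,t) − √n μ(ζₙ(·,t))` for a measure `μ`. -/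
def xiP (Tarr : ℕ → ℕ → CM lam Astar) (f : Circle1 → ℝ) (μ : Measure Circle1) (n : ℕ)
    (x : Circle1) (t : ℝ) : ℝ :=
  Real.sqrt n * zetaP Tarr f n x t - Real.sqrt n * ∫ y, zetaP Tarr f n y t ∂μ

/-- The Hölder continuity (exponent `η`) of the curve `γ` on `[0,1]`, w.r.t. `d_{C¹}`. -/
def HolderCurve (η : ℝ) (γ : ℝ → CM lam Astar) : Prop :=
  ∃ H : ℝ, ∀ s ∈ Icc (0:ℝ) 1, ∀ t ∈ Icc (0:ℝ) 1, dC1 (γ s) (γ t) ≤ H * |s - t| ^ η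

/-- The convergence-rate condition `sup_n n^η sup_t d_{C¹}(T_{n,⌊nt⌋}, γ_t) < ∞`. -/
def ArrayApprox (η : ℝ) (γ : ℝ → CM lam Astar) (Tarr : ℕ → ℕ → CM lam Astar) : Prop :=
  ∃ M : ℝ, ∀ n : ℕ, 1 ≤ n → ∀ t ∈ Icc (0:ℝ) 1,
    (n : ℝ) ^ η * dC1 (Tarr n ⌊(n : ℝ) * t⌋₊) (γ t) ≤ M

end QDS

/-- The path space: functions `[0,1] → ℝ` with the topology of uniform convergence;
continuous paths (with the supremum metric) embed isometrically. -/
abbrev PathSpace : Type := (Icc (0:ℝ) 1) →ᵤ ℝ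

instance : MeasurableSpace PathSpace := borel PathSpace

/-- A function `[0,1] → ℝ` (given as a function on `ℝ`) as a point of the path space. -/
def pathOf (g : ℝ → ℝ) : PathSpace := UniformFun.ofFun (fun t => g t)

/-- Evaluation of a path at time `t` (clamped to `[0,1]`). -/
def evalPath (t : ℝ) (ω : PathSpace) : ℝ := UniformFun.toFun ω (projIcc 0 1 zero_le_one t)


section Extra

variable {lam Astar : ℝ}

/-- `μ(ζₙ(·,t))` for the measure with density `ρ` w.r.t. `𝔪`. -/
def zetaMean (Tarr : ℕ → ℕ → CM lam Astar) (f : Circle1 → ℝ) (ρ : Circle1 → ℝ)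
    (n : ℕ) (t : ℝ) : ℝ :=
  ∫ y : Circle1, zetaP Tarr f n y t * ρ y

/-- `𝔪(ζₙ(·,t))`, the mean w.r.t. the Lebesgue measure. -/
def zetaMeanM (Tarr : ℕ → ℕ → CM lam Astar) (f : Circle1 → ℝ) (n : ℕ) (t : ℝ) : ℝ :=
  ∫ y : Circle1, zetaP Tarr f n y t

/-- `ξₙ(x,t) = √n ζₙ(x,t) − √n μ(ζₙ(·,t))`, where `μ` has density `ρ`. -/
def xiD (Tarr : ℕ → ℕ → CM lam Astar) (f : Circle1 → ℝ) (ρ : Circle1 → ℝ)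
    (n : ℕ) (x : Circle1) (t : ℝ) : ℝ :=
  Real.sqrt n * zetaP Tarr f n x t - Real.sqrt n * zetaMean Tarr f ρ n t

end Extra

/-- The σ-algebra `𝔉_t` on the path space, generated by the evaluations at times `s ∈ [0,t]`. -/
def pathFiltration (t : ℝ) : MeasurableSpace PathSpace :=
  ⨆ (s : ℝ) (_ : 0 ≤ s ∧ s ≤ t), MeasurableSpace.comap (evalPath s) (borel ℝ)

/-- The process `M_t(ω) = A(ω(t)) − A(ω(0)) − ½∫₀ᵗ σ̂ₛ²·A''(ω(s)) ds`. -/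
def MGproc (σ2 : ℝ → ℝ) (A : ℝ → ℝ) (t : ℝ) (ω : PathSpace) : ℝ :=
  A (evalPath t ω) - A (evalPath 0 ω) -
    (1/2) * ∫ s in (0:ℝ)..t, σ2 s * deriv (deriv A) (evalPath s ω)

/-- `P` solves the martingale problem on `C⁰([0,1],ℝ)` for the generator `½σ̂ₜ² d²/dx²`,
started at `0`:  `P` is a probability measure, concentrated on continuous paths starting at `0`,
and for every `A ∈ C_c^∞(ℝ)` the process `MGproc σ2 A` is a `P`-martingale w.r.t. the
natural filtration `𝔉_t`.  -/
def SolvesMartingaleProblem (σ2 : ℝ → ℝ) (P : Measure PathSpace) : Prop :=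
  IsProbabilityMeasure P ∧
  P {ω : PathSpace | evalPath 0 ω = 0} = 1 ∧
  P {ω : PathSpace | Continuous (UniformFun.toFun ω)} = 1 ∧
  ∀ A : ℝ → ℝ, ContDiff ℝ (⊤ : ℕ∞) A → HasCompactSupport A →
    (∀ t ∈ Icc (0:ℝ) 1, Integrable (MGproc σ2 A t) P) ∧
    (∀ t ∈ Icc (0:ℝ) 1, @Measurable PathSpace ℝ (pathFiltration t) _ (MGproc σ2 A t)) ∧
    (∀ s ∈ Icc (0:ℝ) 1, ∀ t ∈ Icc (0:ℝ) 1, s ≤ t →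
      P[MGproc σ2 A t | pathFiltration s] =ᵐ[P] MGproc σ2 A s)

end

/-- Theorem `thm:mean`.  If `f` is Lipschitz and `μ` is an arbitrary
absolutely continuous probability measure, then `t ↦ μ̂ₜ(f)` is continuous on `[0,1]` and the
laws of the paths `t ↦ ζₙ(x,t)` converge weakly on `C⁰([0,1],ℝ)` to the point mass at
`ζ(t) = ∫₀ᵗ μ̂ₛ(f) ds`; in particular the limit is independent of `μ`. -/

theorem coe_shift {lam A : ℝ} (T : CM lam A) (x : ℝ) (m : ℤ) :
    T.F (x + m) = T.F x + m * T.deg := by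
  induction m using Int.induction_on with
  | zero => simp
  | succ i ih =>
    have := T.lift_add_one (x + (i:ℤ))
    push_cast at *
    rw [← add_assoc, this, ih]; ring
  | pred i ih =>
    have := T.lift_add_one (x + (-(i:ℤ) - 1 : ℤ))
    push_cast at *
    rw [show x + (-(i:ℝ) - 1) + 1 = x + -(i:ℝ) by ring, ih] at this
    linarith

theorem toMap_coe {lam A : ℝ} (T : CM lam A) (x : ℝ) :
    T.toMap (x : Circle1) = ((T.F x : ℝ) : Circle1) := by
  unfold CM.toMap
  rw [AddCircle.coe_equivIco_mk_apply]
  have h : Int.fract (x / 1) * 1 = x + ((-⌊x⌋ : ℤ) : ℝ) := by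
    rw [div_one, mul_one, Int.fract]; push_cast; ring
  rw [h, coe_shift, AddCircle.coe_add]
  have : (((((-⌊x⌋ : ℤ) : ℝ)) * (T.deg : ℝ) : ℝ) : Circle1) = 0 := by
    rw [AddCircle.coe_eq_zero_iff]
    exact ⟨-⌊x⌋ * T.deg, by simp⟩
  rw [this, add_zero]

theorem toMap_cont {lam A : ℝ} (T : CM lam A) : Continuous T.toMap := by
  have hq : IsQuotientMap (QuotientAddGroup.mk : ℝ → Circle1) :=
    QuotientAddGroup.isQuotientMap_mk _
  rw [hq.continuous_iff]
  have : T.toMap ∘ (QuotientAddGroup.mk : ℝ → Circle1) =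
      fun x => ((T.F x : ℝ) : Circle1) := by
    ext x; exact toMap_coe T x
  rw [this]
  exact (AddCircle.continuous_mk' (1:ℝ)).comp T.contDiff.continuous

theorem mapIter_cont {lam A : ℝ} (Ts : ℕ → CM lam A) (k : ℕ) : Continuous (mapIter Ts k) := by
  induction k with
  | zero => exact continuous_id
  | succ k ih => exact (toMap_cont _).comp ih

theorem mapIter_coe {lam A : ℝ} (Ts : ℕ → CM lam A) (k : ℕ) (x : ℝ) :
    mapIter Ts k (x : Circle1) = ((liftIter Ts k x : ℝ) : Circle1) := by
  induction k with
  | zero => rfl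
  | succ k ih =>
    show (Ts (k+1)).toMap (mapIter Ts k x) = _
    rw [ih, toMap_coe]; rfl

theorem mapIter_add {lam A : ℝ} (Ts : ℕ → CM lam A) (a j : ℕ) (x : Circle1) :
    mapIter Ts (a + j) x = mapIter (fun i => Ts (a + i)) j (mapIter Ts a x) := by
  induction j with
  | zero => rfl
  | succ j ih =>
    show (Ts (a + j + 1)).toMap (mapIter Ts (a + j) x) = _
    rw [ih]; rfl

theorem mapIter_const {lam A : ℝ} (T : CM lam A) (j : ℕ) :
    mapIter (fun _ => T) j = T.toMap^[j] := by
  induction j with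
  | zero => rfl
  | succ j ih =>
    rw [Function.iterate_succ']
    show T.toMap ∘ mapIter (fun _ => T) j = _
    rw [ih]

structure GoodL (K Λ : ℝ) (G g1 g2 : ℝ → ℝ) : Prop where
  d1 : ∀ x, HasDerivAt G (g1 x) x
  d2 : ∀ x, HasDerivAt g1 (g2 x) x
  lo : ∀ x, Λ ≤ g1 x
  di : ∀ x, |g2 x| ≤ K * g1 x ^ 2
  pe : ∃ d : ℤ, ∀ x, G (x + 1) = G x + d

theorem GoodL_iter {lam A : ℝ} (hlam : 1 < lam) (hA : 0 < A) (Ts : ℕ → CM lam A) (k : ℕ) :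
    ∃ g1 g2, GoodL (A / (lam * (lam - 1))) (lam ^ k) (liftIter Ts k) g1 g2 := by
  have hK : 0 < A / (lam * (lam - 1)) := by
    apply div_pos hA (mul_pos (by linarith) (by linarith))
  have hKe : A / (lam * (lam - 1)) * (lam * (lam - 1)) = A := by
    have : lam * (lam - 1) ≠ 0 := (mul_pos (by linarith) (by linarith)).ne'
    exact div_mul_cancel₀ _ this
  set K := A / (lam * (lam - 1)) with hKdef
  clear_value K
  induction k with
  | zero =>
    refine ⟨fun _ => 1, fun _ => 0, ⟨fun x => hasDerivAt_id x, fun x => hasDerivAt_const x 1,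
      fun x => by simp, fun x => by simp [hK.le], ⟨1, fun x => by simp [liftIter]⟩⟩⟩
  | succ k ih =>
    obtain ⟨g1, g2, h⟩ := ih
    set T := Ts (k+1) with hT
    have hF1 : ∀ x, HasDerivAt T.F (deriv T.F x) x := fun x =>
      (T.contDiff.differentiable (by norm_num)).differentiableAt.hasDerivAt
    have hF2 : ∀ x, HasDerivAt (deriv T.F) (deriv (deriv T.F) x) x := fun x => by
      have : ContDiff ℝ 1 (deriv T.F) := by
        have := T.contDiff
        rw [show (2 : WithTop ℕ∞) = 1 + 1 by norm_num, contDiff_succ_iff_deriv] at this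
        exact this.2.2
      exact (this.differentiable (by norm_num)).differentiableAt.hasDerivAt
    refine ⟨fun x => deriv T.F (liftIter Ts k x) * g1 x,
      fun x => deriv (deriv T.F) (liftIter Ts k x) * g1 x * g1 x +
        deriv T.F (liftIter Ts k x) * g2 x, ?_⟩
    constructor
    · intro x
      exact (hF1 (liftIter Ts k x)).comp x (h.d1 x)
    · intro x
      exact ((hF2 (liftIter Ts k x)).comp x (h.d1 x)).mul (h.d2 x)
    · intro x
      rw [pow_succ, mul_comm]
      exact mul_le_mul (T.expanding _) (h.lo x) (by positivity)
        (by linarith [T.expanding (liftIter Ts k x)])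
    · intro x
      have h1 := T.expanding (liftIter Ts k x)
      have h2 := T.second_bound (liftIter Ts k x)
      have h3 := h.di x
      set p := deriv T.F (liftIter Ts k x)
      set q := deriv (deriv T.F) (liftIter Ts k x)
      have hp : A + K * p ≤ K * p ^ 2 := by
        have : lam * (lam - 1) ≤ p * (p - 1) := by nlinarith
        nlinarith [mul_le_mul_of_nonneg_left this hK.le]
      calc |q * g1 x * g1 x + p * g2 x| ≤ |q * g1 x * g1 x| + |p * g2 x| := abs_add_le _ _
        _ = |q| * (g1 x)^2 + p * |g2 x| := by
            rw [abs_mul, abs_mul, abs_mul, mul_assoc, abs_mul_abs_self, abs_of_pos (a := p) (by linarith)]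
            ring
        _ ≤ A * (g1 x)^2 + p * (K * g1 x ^ 2) := by
            gcongr
            linarith
        _ = (A + K * p) * (g1 x)^2 := by ring
        _ ≤ (K * p^2) * (g1 x)^2 := by gcongr
        _ = _ := by ring
    · obtain ⟨d, hd⟩ := h.pe
      refine ⟨d * T.deg, fun x => ?_⟩
      show T.F (liftIter Ts k (x + 1)) = T.F (liftIter Ts k x) + _
      rw [hd, coe_shift]; push_cast; ring

section GLfs
variable {K Λ : ℝ} {G g1 g2 : ℝ → ℝ}

theorem GoodL.strictMono (h : GoodL K Λ G g1 g2) (hΛ : 1 ≤ Λ) : StrictMono G := by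
  apply strictMono_of_deriv_pos
  intro x; rw [(h.d1 x).deriv]; linarith [h.lo x]

theorem GoodL.cont (h : GoodL K Λ G g1 g2) : Continuous G :=
  continuous_iff_continuousAt.2 fun x => (h.d1 x).continuousAt

theorem GoodL.growth (h : GoodL K Λ G g1 g2) {x y : ℝ} (hxy : x ≤ y) : Λ * (y - x) ≤ G y - G x := by
  have : Monotone fun x => G x - Λ * x := by
    apply monotone_of_deriv_nonneg
    · intro x; exact ((h.d1 x).sub ((hasDerivAt_id x).const_mul Λ)).differentiableAt
    · intro x
      have := ((h.d1 x).sub ((hasDerivAt_id x).const_mul Λ)).deriv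
      simp only [id] at this
      rw [show (fun x => G x - Λ * x) = (G - fun y => Λ * y) from rfl, this]
      linarith [h.lo x]
  have := this hxy
  simp only at this
  linarith

theorem GoodL.next (h : GoodL K Λ G g1 g2) (hΛ : 1 ≤ Λ) (x : ℝ) :
    ∃ x', x < x' ∧ x' - x ≤ 1 / Λ ∧ G x' = G x + 1 := by
  have h1 := h.growth (show x ≤ x + 1 by linarith)
  have : G x + 1 ∈ Icc (G x) (G (x+1)) := ⟨by linarith, by linarith⟩
  obtain ⟨x', hx', he⟩ := intermediate_value_Icc (by linarith) h.cont.continuousOn this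
  have hlt : x < x' := (h.strictMono hΛ).lt_iff_lt.1 (by linarith)
  refine ⟨x', hlt, ?_, he⟩
  have := h.growth hlt.le
  rw [le_div_iff₀ (by linarith)]
  linarith

theorem GoodL.ratio (h : GoodL K Λ G g1 g2) (hΛ : 1 ≤ Λ) (hK : 0 ≤ K) {x u : ℝ} (hxu : x ≤ u)
    (hu : G u ≤ G x + 1) : g1 u ≤ Real.exp K * g1 x ∧ g1 x ≤ Real.exp K * g1 u := by
  have pos : ∀ x, 0 < g1 x := fun x => by linarith [h.lo x]
  have hdl : ∀ x, HasDerivAt (fun x => Real.log (g1 x)) (g2 x / g1 x) x := fun x =>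
    (h.d2 x).log (pos x).ne'
  have hb : ∀ x, |g2 x / g1 x| ≤ K * g1 x := fun x => by
    rw [abs_div, abs_of_pos (pos x), div_le_iff₀ (pos x)]
    linarith [h.di x]
  have hm : Monotone fun x => Real.log (g1 x) + K * G x := by
    have hd := fun x => (hdl x).add ((h.d1 x).const_mul K)
    apply monotone_of_deriv_nonneg
    · intro x; exact (hd x).differentiableAt
    · intro x
      rw [show (fun x => Real.log (g1 x) + K * G x) = ((fun x => Real.log (g1 x)) + fun y => K * G y) from rfl, (hd x).deriv]
      linarith [neg_le_of_abs_le (hb x)]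
  have hn : Monotone fun x => K * G x - Real.log (g1 x) := by
    have hd := fun x => ((h.d1 x).const_mul K).sub (hdl x)
    apply monotone_of_deriv_nonneg
    · intro x; exact (hd x).differentiableAt
    · intro x
      rw [show (fun x => K * G x - Real.log (g1 x)) = ((fun y => K * G y) - (fun x => Real.log (g1 x))) from rfl, (hd x).deriv]
      linarith [le_of_abs_le (hb x)]
  have h1 := hm hxu
  have h2 := hn hxu
  simp only at h1 h2
  have h3 : K * (G u - G x) ≤ K * 1 := by gcongr; linarith
  constructor
  · rw [← Real.log_le_log_iff (pos _) (mul_pos (Real.exp_pos _) (pos _)),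
      Real.log_mul (Real.exp_pos _).ne' (pos _).ne', Real.log_exp]
    linarith
  · rw [← Real.log_le_log_iff (pos _) (mul_pos (Real.exp_pos _) (pos _)),
      Real.log_mul (Real.exp_pos _).ne' (pos _).ne', Real.log_exp]
    linarith

theorem GoodL.distort0 (h : GoodL K Λ G g1 g2) (hΛ : 1 ≤ Λ) (hK : 0 ≤ K) {x x' : ℝ}
    (hx : G x' = G x + 1) {E : Set Circle1} (hE : MeasurableSet E) :
    g1 x * volume.real (Ioc x x' ∩ (fun u => (G u : Circle1)) ⁻¹' E)
      ≤ Real.exp K * volume.real E ∧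
    volume.real E ≤
      Real.exp K * g1 x * volume.real (Ioc x x' ∩ (fun u => (G u : Circle1)) ⁻¹' E) := by
  have pos : ∀ x, 0 < g1 x := fun x => by linarith [h.lo x]
  have hmk : Continuous (QuotientAddGroup.mk : ℝ → Circle1) := AddCircle.continuous_mk' (1:ℝ)
  set S := Ioc x x' ∩ (fun u => (G u : Circle1)) ⁻¹' E with hS
  have hSm : MeasurableSet S :=
    measurableSet_Ioc.inter ((hmk.comp h.cont).measurable hE)
  have hsm := h.strictMono hΛ
  have him : G '' S = QuotientAddGroup.mk ⁻¹' E ∩ Ioc (G x) (G x + 1) := by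
    ext y; constructor
    · rintro ⟨u, ⟨hu1, hu2⟩, rfl⟩
      exact ⟨hu2, hsm hu1.1, hx ▸ hsm.monotone hu1.2⟩
    · rintro ⟨hy1, hy2⟩
      have hxx : x ≤ x' := hsm.le_iff_le.1 (by linarith)
      have : y ∈ Icc (G x) (G x') := ⟨hy2.1.le, hx ▸ hy2.2⟩
      obtain ⟨u, hu, rfl⟩ := intermediate_value_Icc hxx h.cont.continuousOn this
      exact ⟨u, ⟨⟨hsm.lt_iff_lt.1 hy2.1, hu.2⟩, hy1⟩, rfl⟩
  have hcv := lintegral_image_eq_lintegral_abs_deriv_mul hSm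
    (fun x _ => (h.d1 x).hasDerivWithinAt) hsm.injective.injOn (fun _ => 1)
  rw [him] at hcv
  simp only [mul_one, lintegral_const, one_mul, Measure.restrict_apply_univ] at hcv
  rw [← AddCircle.add_projection_respects_measure (1:ℝ) (G x) hE] at hcv
  have hSfin : volume S ≠ ⊤ :=
    ((measure_mono inter_subset_left).trans_lt (by simp : volume (Ioc x x') < ⊤)).ne
  have hr : ∀ u ∈ S, g1 u ≤ Real.exp K * g1 x ∧ g1 x ≤ Real.exp K * g1 u := fun u hu =>
    h.ratio hΛ hK hu.1.1.le (hx ▸ hsm.monotone hu.1.2)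
  constructor
  · have : ENNReal.ofReal (Real.exp (-K) * g1 x) * volume S ≤ volume E := by
      rw [hcv, ← setLIntegral_const]
      apply setLIntegral_mono' hSm
      intro u hu
      apply ENNReal.ofReal_le_ofReal
      rw [abs_of_pos (pos u), Real.exp_neg, inv_mul_le_iff₀ (Real.exp_pos _)]
      exact (hr u hu).2
    have := ENNReal.toReal_mono (measure_ne_top _ _) this
    rw [ENNReal.toReal_mul, ENNReal.toReal_ofReal (mul_pos (Real.exp_pos _) (pos x)).le,
      Real.exp_neg, mul_assoc, inv_mul_le_iff₀ (Real.exp_pos _)] at this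
    exact this
  · have : volume E ≤ ENNReal.ofReal (Real.exp K * g1 x) * volume S := by
      rw [hcv, ← setLIntegral_const]
      apply setLIntegral_mono' hSm
      intro u hu
      apply ENNReal.ofReal_le_ofReal
      rw [abs_of_pos (pos u)]
      exact (hr u hu).1
    have := ENNReal.toReal_mono (ENNReal.mul_ne_top ENNReal.ofReal_ne_top hSfin) this
    rw [ENNReal.toReal_mul, ENNReal.toReal_ofReal (mul_pos (Real.exp_pos _) (pos x)).le] at this
    exact this

theorem vol_univ : volume.real (univ : Set Circle1) = 1 := by
  simp [Measure.real, AddCircle.measure_univ]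

theorem GoodL.distort (h : GoodL K Λ G g1 g2) (hΛ : 1 ≤ Λ) (hK : 0 ≤ K) {x x' : ℝ}
    (hx : G x' = G x + 1) {E : Set Circle1} (hE : MeasurableSet E) :
    volume.real (Ioc x x' ∩ (fun u => (G u : Circle1)) ⁻¹' E)
      ≤ Real.exp (2 * K) * volume.real E * (x' - x) ∧
    volume.real E * (x' - x) ≤
      Real.exp (2 * K) * volume.real (Ioc x x' ∩ (fun u => (G u : Circle1)) ⁻¹' E) := by
  have h1 := h.distort0 hΛ hK hx hE
  have h2 := h.distort0 hΛ hK hx MeasurableSet.univ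
  have hxx : x ≤ x' := (h.strictMono hΛ).le_iff_le.1 (by linarith)
  rw [vol_univ, preimage_univ, inter_univ, Real.volume_real_Ioc_of_le hxx] at h2
  set v := volume.real (Ioc x x' ∩ (fun u => (G u : Circle1)) ⁻¹' E)
  have hv : 0 ≤ v := measureReal_nonneg
  have hE0 : 0 ≤ volume.real E := measureReal_nonneg
  have pos : 0 < g1 x := by linarith [h.lo x]
  set e := Real.exp K with he
  have he2 : Real.exp (2 * K) = e * e := by rw [two_mul, Real.exp_add]
  have hep : 0 < e := Real.exp_pos K
  rw [he2]
  constructor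
  · calc v = 1 * v := by ring
      _ ≤ (e * g1 x * (x' - x)) * v := by gcongr; exact h2.2
      _ = e * (x' - x) * (g1 x * v) := by ring
      _ ≤ e * (x' - x) * (e * volume.real E) := by
          apply mul_le_mul_of_nonneg_left h1.1
          exact mul_nonneg hep.le (by linarith)
      _ = _ := by ring
  · calc volume.real E * (x' - x) ≤ (e * g1 x * v) * (x' - x) := by
          apply mul_le_mul_of_nonneg_right h1.2; linarith
      _ = e * v * (g1 x * (x' - x)) := by ring
      _ ≤ e * v * (e * 1) := by
          apply mul_le_mul_of_nonneg_left h2.1; positivity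
      _ = _ := by ring

theorem GoodL.bound (h : GoodL K Λ G g1 g2) (hΛ : 1 ≤ Λ) (hK : 0 ≤ K) {E : Set Circle1}
    (hE : MeasurableSet E) :
    volume.real (Ioc 0 1 ∩ (fun u => (G u : Circle1)) ⁻¹' E)
      ≤ Real.exp (2 * K) * volume.real E := by
  choose nx hnx1 hnx2 hnx3 using h.next hΛ
  have key : ∀ i : ℕ, ∃ a, 0 ≤ a ∧ G a = G 0 + i ∧
      volume.real (Ioc 0 a ∩ (fun u => (G u : Circle1)) ⁻¹' E)
      ≤ Real.exp (2 * K) * volume.real E * a := by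
    intro i
    induction i with
    | zero => exact ⟨0, le_rfl, by simp, by simp⟩
    | succ i ih =>
      obtain ⟨a, ha, hGa, hv⟩ := ih
      refine ⟨nx a, ha.trans (hnx1 a).le, by rw [hnx3, hGa]; push_cast; ring, ?_⟩
      rw [← Ioc_union_Ioc_eq_Ioc ha (hnx1 a).le, union_inter_distrib_right]
      refine (measureReal_union_le _ _).trans ?_
      have := (h.distort hΛ hK (hnx3 a) hE).1
      nlinarith
  obtain ⟨d, hd⟩ := h.pe
  have hd0 := hd 0
  rw [zero_add] at hd0
  have h1 := h.growth (show (0:ℝ) ≤ 1 by norm_num)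
  have hdpos : (0:ℝ) ≤ d := by linarith
  obtain ⟨n, rfl⟩ := Int.eq_ofNat_of_zero_le (by exact_mod_cast hdpos : 0 ≤ d)
  obtain ⟨a, ha, hGa, hv⟩ := key n
  have : a = 1 := (h.strictMono hΛ).injective (by rw [hGa, hd0]; simp)
  subst this
  simpa using hv
end GLfs

theorem push_le {lam A : ℝ} (hlam : 1 < lam) (hA : 0 < A) (Ts : ℕ → CM lam A) (k : ℕ) :
    Measure.map (mapIter Ts k) volume ≤
      ENNReal.ofReal (Real.exp (2 * (A / (lam * (lam - 1))))) • (volume : Measure Circle1) := by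
  have hK : 0 < A / (lam * (lam - 1)) := by
    apply div_pos hA (mul_pos (by linarith) (by linarith))
  obtain ⟨g1, g2, h⟩ := GoodL_iter hlam hA Ts k
  rw [Measure.le_iff]
  intro E hE
  have hm := (mapIter_cont Ts k).measurable
  rw [Measure.map_apply hm hE, AddCircle.add_projection_respects_measure (1:ℝ) 0 (hm hE)]
  have := h.bound (one_le_pow₀ hlam.le) hK.le hE
  have he : (QuotientAddGroup.mk ⁻¹' (mapIter Ts k ⁻¹' E) ∩ Ioc (0:ℝ) (0 + 1)) =
      (Ioc 0 1 ∩ (fun u => (liftIter Ts k u : Circle1)) ⁻¹' E) := by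
    rw [inter_comm, zero_add]; congr 1; ext u
    show mapIter Ts k (u : Circle1) ∈ E ↔ _
    rw [mapIter_coe]; rfl
  rw [he]
  have hfin : volume (Ioc 0 1 ∩ (fun u => (liftIter Ts k u : Circle1)) ⁻¹' E) ≠ ⊤ :=
    ((measure_mono inter_subset_left).trans_lt (by simp : volume (Ioc (0:ℝ) 1) < ⊤)).ne
  rw [Measure.smul_apply, smul_eq_mul, ← ENNReal.toReal_le_toReal hfin
    (ENNReal.mul_ne_top ENNReal.ofReal_ne_top (measure_ne_top _ _)), ENNReal.toReal_mul,
    ENNReal.toReal_ofReal (Real.exp_pos _).le]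
  exact this


theorem inv_zero_one {lam A : ℝ} (hlam : 1 < lam) (hA : 0 < A) (T : CM lam A) {E : Set Circle1}
    (hE : MeasurableSet E) (hinv : T.toMap ⁻¹' E = E) :
    volume E = 0 ∨ volume Eᶜ = 0 := by
  by_contra hcon
  push Not at hcon
  obtain ⟨h1, h2⟩ := hcon
  have hK : 0 < A / (lam * (lam - 1)) := by
    apply div_pos hA (mul_pos (by linarith) (by linarith))
  set K := A / (lam * (lam - 1)) with hKdef
  have hmk : Continuous (QuotientAddGroup.mk : ℝ → Circle1) := AddCircle.continuous_mk' (1:ℝ)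
  set S : Set ℝ := QuotientAddGroup.mk ⁻¹' Eᶜ with hS
  have hS0 : volume S ≠ 0 := by
    intro h0
    rw [AddCircle.add_projection_respects_measure (1:ℝ) 0 hE.compl] at h2
    exact h2 (measure_mono_null inter_subset_left h0)
  have hne : (ae (volume.restrict S)).NeBot := by
    rw [ae_neBot]
    intro h; exact hS0 (Measure.restrict_eq_zero.1 h)
  obtain ⟨x, hx⟩ := (IsUnifLocDoublingMeasure.ae_tendsto_measure_inter_div
    (volume : Measure ℝ) S 1).exists
  have hinvk : ∀ k, mapIter (fun _ => T) k ⁻¹' E = E := by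
    intro k
    induction k with
    | zero => rfl
    | succ k ih =>
      show (T.toMap ∘ mapIter (fun _ => T) k) ⁻¹' E = E
      rw [preimage_comp, hinv, ih]
  choose g1 g2 hg using fun k => GoodL_iter hlam hA (fun _ => T) k
  have hΛ : ∀ k : ℕ, 1 ≤ lam ^ k := fun k => one_le_pow₀ hlam.le
  choose x' hx1 hx2 hx3 using fun k => (hg k).next (hΛ k) x
  have hball : ∀ k, Metric.closedBall ((x + x' k)/2) ((x' k - x)/2) = Icc x (x' k) := by
    intro k
    rw [Real.closedBall_eq_Icc]
    congr 1 <;> ring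
  have hlim : Tendsto (fun k => (x' k - x)/2) atTop (𝓝[>] 0) := by
    rw [tendsto_nhdsWithin_iff]
    refine ⟨?_, Eventually.of_forall fun k => by
      have := hx1 k; simp only [mem_Ioi]; linarith⟩
    have hz : Tendsto (fun k : ℕ => (1/lam)^k) atTop (𝓝 0) :=
      tendsto_pow_atTop_nhds_zero_of_lt_one (by positivity) (by
        rw [div_lt_one (by linarith)]; exact hlam)
    refine squeeze_zero (fun k => by have := hx1 k; linarith) (fun k => ?_) hz
    have h3 := hx2 k; have := hx1 k
    rw [one_div_pow]
    linarith
  have ht := hx (fun k => (x + x' k)/2) (fun k => (x' k - x)/2) hlim (Eventually.of_forall fun k => by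
    rw [one_mul, hball]; exact ⟨le_rfl, (hx1 k).le⟩)
  simp only [hball] at ht
  have ht2 := (ENNReal.tendsto_toReal ENNReal.one_ne_top).comp ht
  have hmE : 0 < volume.real E := by
    rw [measureReal_def]; exact ENNReal.toReal_pos h1 (measure_ne_top _ _)
  set c := volume.real E / Real.exp (2 * K) with hc
  have hcpos : 0 < c := by positivity
  have : (1 : ℝ) ≤ 1 - c := by
    rw [← ENNReal.toReal_one]
    refine le_of_tendsto ht2 (Eventually.of_forall fun k => ?_)
    have hd := ((hg k).distort (hΛ k) hK.le (hx3 k) hE).2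
    have hxx := hx1 k
    have hpre : (fun u => ((liftIter (fun _ => T) k u : ℝ) : Circle1)) ⁻¹' E =
        QuotientAddGroup.mk ⁻¹' E := by
      conv_rhs => rw [← hinvk k]
      ext u
      show _ ↔ mapIter (fun _ => T) k (u : Circle1) ∈ E
      rw [mapIter_coe]; rfl
    rw [hpre] at hd
    simp only [Function.comp]
    rw [ENNReal.toReal_div, ← measureReal_def, ← measureReal_def,
      Real.volume_real_Icc_of_le hxx.le, div_le_iff₀ (by linarith)]
    have hsplit : volume.real (Ioc x (x' k) ∩ QuotientAddGroup.mk ⁻¹' E) +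
        volume.real (S ∩ Icc x (x' k)) = x' k - x := by
      have e1 : volume.real (S ∩ Icc x (x' k)) = volume.real (S ∩ Ioc x (x' k)) := by
        apply measureReal_congr
        exact (ae_eq_refl S).inter Ioc_ae_eq_Icc.symm
      have hm : MeasurableSet (QuotientAddGroup.mk ⁻¹' E : Set ℝ) := hmk.measurable hE
      rw [e1, ← Real.volume_real_Ioc_of_le hxx.le,
        ← measureReal_inter_add_sdiff (s := Ioc x (x' k)) hm (by simp)]
      congr 2
      rw [inter_comm, sdiff_eq]; rfl
    have : c * (x' k - x) ≤ volume.real (Ioc x (x' k) ∩ QuotientAddGroup.mk ⁻¹' E) := by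
      rw [hc, div_mul_eq_mul_div, div_le_iff₀ (Real.exp_pos _)]
      linarith
    rw [ENNReal.toReal_one]
    linarith
  linarith

theorem mean_erg {α : Type*} [MeasurableSpace α] {ν : Measure α} [IsProbabilityMeasure ν]
    {T : α → α} (hT : Ergodic T ν) {f : α → ℝ} (hf : MemLp f 2 ν) :
    TendstoInMeasure ν (fun n x => birkhoffAverage ℝ T f n x) atTop
      (fun _ => ∫ y, f y ∂ν) := by
  have hmp := hT.toMeasurePreserving
  set U : Lp ℝ 2 ν →L[ℝ] Lp ℝ 2 ν :=
    (Lp.compMeasurePreservingₗᵢ ℝ T hmp).toContinuousLinearMap with hU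
  have hUn : ‖U‖ ≤ 1 := LinearIsometry.norm_toContinuousLinearMap_le _
  have hlim := U.tendsto_birkhoffAverage_orthogonalProjection hUn (hf.toLp f)
  set g : Lp ℝ 2 ν := ((U.eqLocus (1 : Lp ℝ 2 ν →L[ℝ] Lp ℝ 2 ν)).orthogonalProjectionOnto (hf.toLp f) : Lp ℝ 2 ν) with hg
  have hgfix : U g = g := by
    have := ((U.eqLocus (1 : Lp ℝ 2 ν →L[ℝ] Lp ℝ 2 ν)).orthogonalProjectionOnto (hf.toLp f)).2
    exact this
  have hUae : ∀ h : Lp ℝ 2 ν, (U h : α → ℝ) =ᵐ[ν] h ∘ T := fun h =>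
    Lp.coeFn_compMeasurePreserving h hmp
  obtain ⟨c, hc⟩ := hT.ae_eq_const_of_ae_eq_comp_ae (Lp.aestronglyMeasurable g)
    (((hUae g).symm.trans (by rw [hgfix])))
  have hit : ∀ n, ((U^[n] (hf.toLp f) : Lp ℝ 2 ν) : α → ℝ) =ᵐ[ν] f ∘ T^[n] := by
    intro n
    induction n with
    | zero => exact hf.coeFn_toLp
    | succ n ih =>
      rw [Function.iterate_succ_apply', Function.iterate_succ]
      refine (hUae _).trans ?_
      exact hmp.quasiMeasurePreserving.ae_eq_comp ih
  have hav : ∀ n, ((birkhoffAverage ℝ U _root_.id n (hf.toLp f) : Lp ℝ 2 ν) : α → ℝ) =ᵐ[ν]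
      fun x => birkhoffAverage ℝ T f n x := by
    intro n
    unfold birkhoffAverage birkhoffSum
    refine (Lp.coeFn_smul _ _).trans ?_
    have h1 : ((∑ k ∈ Finset.range n, _root_.id (U^[k] (hf.toLp f)) : Lp ℝ 2 ν) : α → ℝ) =ᵐ[ν]
        fun x => ∑ k ∈ Finset.range n, f (T^[k] x) := by
      induction n with
      | zero =>
        simp only [Finset.range_zero, Finset.sum_empty]
        exact Lp.coeFn_zero ℝ 2 ν
      | succ n ih =>
        rw [Finset.sum_range_succ]
        refine (Lp.coeFn_add _ _).trans ?_
        filter_upwards [ih, hit n] with x h1 h2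
        rw [Finset.sum_range_succ]
        rw [Pi.add_apply, h1]
        congr 1
    filter_upwards [h1] with x hx
    simp only [Pi.smul_apply, hx]
  -- the constant
  have hcI : c = ∫ y, f y ∂ν := by
    have hint : Continuous fun h : Lp ℝ 2 ν => inner ℝ (Lp.const 2 ν (1:ℝ)) h := by fun_prop
    have hIn : ∀ h : Lp ℝ 2 ν, inner ℝ (Lp.const 2 ν (1:ℝ)) h = ∫ x, h x ∂ν := by
      intro h
      rw [L2.inner_def]
      apply integral_congr_ae
      filter_upwards [Lp.coeFn_const (p := 2) (μ := ν) (1:ℝ)] with x hx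
      simp [hx]
    have h1 := (hint.tendsto g).comp hlim
    have h2 : ∀ n : ℕ, n ≠ 0 → inner ℝ (Lp.const 2 ν (1:ℝ)) (birkhoffAverage ℝ U _root_.id n (hf.toLp f))
        = ∫ y, f y ∂ν := by
      intro n hn
      rw [birkhoffAverage, birkhoffSum, inner_smul_right, inner_sum]
      have : ∀ k ∈ Finset.range n, inner ℝ (Lp.const 2 ν (1:ℝ)) (_root_.id (U^[k] (hf.toLp f))) = ∫ y, f y ∂ν := by
        intro k _
        rw [id, hIn, integral_congr_ae (hit k)]
        have := (hmp.iterate k)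
        have e := this.map_eq
        conv_rhs => rw [← e]
        rw [integral_map this.aemeasurable (by rw [e]; exact hf.aestronglyMeasurable)]
        rfl
      rw [Finset.sum_congr rfl this, Finset.sum_const, Finset.card_range, nsmul_eq_mul,
        inv_mul_cancel_left₀ (by exact_mod_cast hn)]
    have h3 : Tendsto ((fun h : Lp ℝ 2 ν => inner ℝ (Lp.const 2 ν (1:ℝ)) h) ∘ fun n => birkhoffAverage ℝ U _root_.id n (hf.toLp f)) atTop (𝓝 (∫ y, f y ∂ν)) := by
      apply tendsto_const_nhds.congr'
      filter_upwards [eventually_ne_atTop 0] with n hn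
      exact (h2 n hn).symm
    have h4 := tendsto_nhds_unique h1 h3
    rw [hIn, integral_congr_ae hc] at h4
    simpa using h4
  have := tendstoInMeasure_of_tendsto_Lp hlim
  refine (this.congr_left hav).congr_right ?_
  rw [← hcI]
  exact hc

theorem birk_cont {lam A : ℝ} (T : CM lam A) {f : Circle1 → ℝ} (hf : Continuous f) (n : ℕ) :
    Continuous (fun x => birkhoffAverage ℝ T.toMap f n x) := by
  have h2 := fun k => hf.comp ((toMap_cont T).iterate k)
  show Continuous fun x => (n:ℝ)⁻¹ * ∑ k ∈ Finset.range n, f (T.toMap^[k] x)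
  exact continuous_const.mul (continuous_finsetSum _ fun k _ => h2 k)

theorem srb_avg {lam A : ℝ} (hlam : 1 < lam) (hA : 0 < A) (T : CM lam A) {ρ : Circle1 → ℝ}
    (hρ : IsSRBDensity T ρ) {f : Circle1 → ℝ} (hf : Continuous f) {ε : ℝ} (hε : 0 < ε) (N : ℕ) :
    ∃ m ≥ N, 1 ≤ m ∧ ∫ x : Circle1, |birkhoffAverage ℝ T.toMap f m x - ∫ y : Circle1, f y * ρ y| < ε := by
  obtain ⟨⟨hi, h1, h0⟩, hpos, hmap⟩ := hρ
  set ν : Measure Circle1 := volume.withDensity (fun x => ENNReal.ofReal (ρ x)) with hν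
  have hprob : IsProbabilityMeasure ν := by
    constructor
    rw [hν, withDensity_apply _ MeasurableSet.univ, Measure.restrict_univ,
      ← ofReal_integral_eq_lintegral_ofReal hi (ae_of_all _ h0), h1, ENNReal.ofReal_one]
  have hν1 : ν ≪ volume := withDensity_absolutelyContinuous _ _
  have hν2 : volume ≪ ν := by
    apply withDensity_absolutelyContinuous' hi.aestronglyMeasurable.aemeasurable.ennreal_ofReal
    filter_upwards [hpos] with x hx
    simpa using hx
  have herg : Ergodic T.toMap ν := by
    refine ⟨⟨(toMap_cont T).measurable, hmap⟩, ⟨fun {s} hs hinv => ?_⟩⟩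
    rw [eventuallyConst_set']
    rcases inv_zero_one hlam hA T hs hinv with h | h
    · left; exact hν1.ae_le (ae_eq_empty.2 h)
    · right; exact hν1.ae_le (ae_eq_univ.2 h)
  obtain ⟨B, hB⟩ : ∃ B, ∀ x, |f x| ≤ B := by
    obtain ⟨B, hB⟩ := isCompact_univ.exists_bound_of_continuousOn hf.continuousOn
    exact ⟨B, fun x => hB x (mem_univ x)⟩
  have hfm : MemLp f 2 ν := MemLp.of_bound hf.aestronglyMeasurable B (ae_of_all _ hB)
  have hc : ∫ y, f y ∂ν = ∫ y : Circle1, f y * ρ y := by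
    rw [hν, integral_withDensity_eq_integral_toReal_smul₀
      hi.aestronglyMeasurable.aemeasurable.ennreal_ofReal (ae_of_all _ fun x => ENNReal.ofReal_lt_top)]
    congr 1; ext x
    rw [ENNReal.toReal_ofReal (h0 x), smul_eq_mul, mul_comm]
  have ht := mean_erg herg hfm
  rw [hc] at ht
  set c := ∫ y : Circle1, f y * ρ y
  obtain ⟨ns, hns, hae⟩ := ht.exists_seq_tendsto_ae
  have hae' := hν2.ae_le hae
  have hcont : ∀ n, Continuous (fun x => birkhoffAverage ℝ T.toMap f n x) := by
    exact birk_cont T hf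
  have hbd : ∀ n x, |birkhoffAverage ℝ T.toMap f n x| ≤ B := by
    intro n x
    have hB0 : 0 ≤ B := (abs_nonneg _).trans (hB x)
    unfold birkhoffAverage birkhoffSum
    rcases Nat.eq_zero_or_pos n with rfl | hn
    · simpa using hB0
    rw [smul_eq_mul, abs_mul, abs_inv, Nat.abs_cast, inv_mul_le_iff₀ (by exact_mod_cast hn)]
    refine (Finset.abs_sum_le_sum_abs _ _).trans ?_
    refine (Finset.sum_le_sum fun k _ => hB _).trans ?_
    simp
  have hlim : Tendsto (fun j => ∫ x : Circle1, |birkhoffAverage ℝ T.toMap f (ns j) x - c|) atTop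
      (𝓝 (∫ x : Circle1, (0:ℝ))) := by
    apply tendsto_integral_of_dominated_convergence (fun _ => B + |c|)
    · intro j; exact ((hcont _).sub continuous_const).abs.aestronglyMeasurable
    · exact integrable_const _
    · intro j; refine ae_of_all _ fun x => ?_
      rw [Real.norm_eq_abs, abs_abs]
      exact (abs_sub _ _).trans (by linarith [hbd (ns j) x])
    · filter_upwards [hae'] with x hx
      have := (hx.sub_const c).abs
      simpa using this
  rw [integral_zero] at hlim
  have e1 := hlim.eventually (gt_mem_nhds hε)
  have e2 := hns.tendsto_atTop.eventually_ge_atTop (max N 1)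
  obtain ⟨j, hj1, hj2⟩ := (e1.and e2).exists
  exact ⟨ns j, (le_max_left _ _).trans hj2, (le_max_right _ _).trans hj2, hj1⟩


theorem close_iter {lam A : ℝ} (T : CM lam A) (j : ℕ) : ∀ {ε : ℝ}, 0 < ε →
    ∃ δ > 0, ∀ Ts : ℕ → CM lam A,
      (∀ i, 1 ≤ i → i ≤ j → ∀ x, dist ((Ts i).toMap x) (T.toMap x) ≤ δ) →
      ∀ x, dist (mapIter Ts j x) (T.toMap^[j] x) < ε := by
  induction j with
  | zero =>
    intro ε hε
    exact ⟨1, one_pos, fun Ts _ x => by simpa [mapIter] using hε⟩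
  | succ j ih =>
    intro ε hε
    have huc : UniformContinuous T.toMap :=
      CompactSpace.uniformContinuous_of_continuous (toMap_cont T)
    obtain ⟨ε', hε', h'⟩ := Metric.uniformContinuous_iff.1 huc (ε/2) (by linarith)
    obtain ⟨δ, hδ, h⟩ := ih hε'
    refine ⟨min δ (ε/2), lt_min hδ (by linarith), fun Ts hTs x => ?_⟩
    have h1 := h Ts (fun i hi hij x => (hTs i hi (by omega) x).trans (min_le_left _ _)) x
    have h2 := h' h1
    have h3 := (hTs (j+1) (by omega) le_rfl (mapIter Ts j x)).trans (min_le_right _ _)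
    rw [Function.iterate_succ_apply']
    show dist ((Ts (j+1)).toMap (mapIter Ts j x)) _ < ε
    linarith [dist_triangle ((Ts (j+1)).toMap (mapIter Ts j x)) (T.toMap (mapIter Ts j x))
      (T.toMap (T.toMap^[j] x))]

theorem close_f {lam A : ℝ} (T : CM lam A) {f : Circle1 → ℝ} (hf : Continuous f)
    {ε : ℝ} (hε : 0 < ε) (m : ℕ) :
    ∃ δ > 0, ∀ Ts : ℕ → CM lam A,
      (∀ i, 1 ≤ i → i < m → ∀ x, dist ((Ts i).toMap x) (T.toMap x) ≤ δ) →
      ∀ j < m, ∀ x, |f (mapIter Ts j x) - f (T.toMap^[j] x)| ≤ ε := by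
  have huc : UniformContinuous f := CompactSpace.uniformContinuous_of_continuous hf
  obtain ⟨ε', hε', h'⟩ := Metric.uniformContinuous_iff.1 huc ε hε
  induction m with
  | zero => exact ⟨1, one_pos, fun Ts _ j hj => by omega⟩
  | succ m ih =>
    obtain ⟨δ, hδ, h⟩ := ih
    obtain ⟨δ', hδ', h2⟩ := close_iter T m hε'
    refine ⟨min δ δ', lt_min hδ hδ', fun Ts hTs j hj x => ?_⟩
    rcases Nat.lt_succ_iff_lt_or_eq.1 hj with hj | rfl
    · exact h Ts (fun i hi hij x => (hTs i hi (by omega) x).trans (min_le_left _ _)) j hj x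
    · have := h2 Ts (fun i hi hij x => (hTs i hi (by omega) x).trans (min_le_right _ _)) x
      have := h' this
      rw [Real.dist_eq] at this
      exact this.le

theorem int_push {lam A : ℝ} (hlam : 1 < lam) (hA : 0 < A) (Ts : ℕ → CM lam A) (k : ℕ)
    {h : Circle1 → ℝ} (hc : Continuous h) (h0 : ∀ x, 0 ≤ h x) :
    ∫ x : Circle1, h (mapIter Ts k x) ≤
      Real.exp (2 * (A / (lam * (lam - 1)))) * ∫ x : Circle1, h x := by
  have hle := push_le hlam hA Ts k
  have hm := (mapIter_cont Ts k).measurable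
  rw [← integral_map hm.aemeasurable hc.aestronglyMeasurable]
  have hint : Integrable h (volume : Measure Circle1) :=
    hc.integrable_of_hasCompactSupport (HasCompactSupport.of_compactSpace h)
  refine (integral_mono_measure hle (ae_of_all _ h0)
    (hint.smul_measure ENNReal.ofReal_ne_top)).trans ?_
  rw [integral_smul_measure, ENNReal.toReal_ofReal (Real.exp_pos _).le, smul_eq_mul]

theorem cint {h : Circle1 → ℝ} (hc : Continuous h) : Integrable h (volume : Measure Circle1) :=
  hc.integrable_of_hasCompactSupport (HasCompactSupport.of_compactSpace h)

theorem int_const (c : ℝ) : ∫ _ : Circle1, c = c := by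
  rw [integral_const, vol_univ, one_smul]

theorem block {lam A : ℝ} (hlam : 1 < lam) (hA : 0 < A) (T : CM lam A) {ρ : Circle1 → ℝ}
    (hρ : IsSRBDensity T ρ) {f : Circle1 → ℝ} (hf : Continuous f) {ε : ℝ} (hε : 0 < ε) :
    ∃ δ > 0, ∃ N : ℝ, 0 ≤ N ∧ ∀ (Ts : ℕ → CM lam A) (a b : ℕ), a ≤ b →
      (∀ i, a < i → i < b → ∀ x, dist ((Ts i).toMap x) (T.toMap x) ≤ δ) →
      ∫ x : Circle1, |∑ k ∈ Finset.Ico a b, (f (mapIter Ts k x) - ∫ y : Circle1, f y * ρ y)|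
        ≤ ε * ((b : ℝ) - a) + N := by
  set c := ∫ y : Circle1, f y * ρ y with hcdef
  set C := Real.exp (2 * (A / (lam * (lam - 1)))) with hC
  have hCpos : 0 < C := Real.exp_pos _
  obtain ⟨m, -, hm1, hm⟩ := srb_avg hlam hA T hρ hf (show 0 < ε / (2 * C) by positivity) 0
  rw [← hcdef] at hm
  clear_value c C
  obtain ⟨δ, hδ, hcl⟩ := close_f T hf (half_pos hε) m
  obtain ⟨B, hB⟩ : ∃ B, ∀ x, |f x| ≤ B := by
    obtain ⟨B, hB⟩ := isCompact_univ.exists_bound_of_continuousOn hf.continuousOn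
    exact ⟨B, fun x => hB x (mem_univ x)⟩
  have hB0 : 0 ≤ B := (abs_nonneg _).trans (hB 0)
  have hm0 : (0:ℝ) < m := by exact_mod_cast hm1
  refine ⟨δ, hδ, m * (B + |c|), by positivity, fun Ts => ?_⟩
  have hcont : ∀ (Ts : ℕ → CM lam A) (s : Finset ℕ), Continuous fun x => ∑ k ∈ s, (f (mapIter Ts k x) - c) :=
    fun Ts s => continuous_finsetSum _ fun k _ => (hf.comp (mapIter_cont Ts k)).sub continuous_const
  have main : ∀ n a : ℕ, 
      (∀ i, a < i → i < a + n → ∀ x, dist ((Ts i).toMap x) (T.toMap x) ≤ δ) →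
      ∫ x : Circle1, |∑ k ∈ Finset.Ico a (a + n), (f (mapIter Ts k x) - c)|
        ≤ ε * n + m * (B + |c|) := by
    intro n
    induction n using Nat.strong_induction_on with
    | _ n ih =>
    intro a hTs
    rcases lt_or_ge n m with hnm | hnm
    · have : ∀ x, |∑ k ∈ Finset.Ico a (a + n), (f (mapIter Ts k x) - c)| ≤ m * (B + |c|) := by
        intro x
        refine (Finset.abs_sum_le_sum_abs _ _).trans ?_
        refine (Finset.sum_le_sum (g := fun _ => B + |c|) fun k _ =>
          (abs_sub _ _).trans (by linarith [hB (mapIter Ts k x)])).trans ?_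
        simp only [Finset.sum_const, Nat.card_Ico, add_tsub_cancel_left, nsmul_eq_mul]
        have : (n:ℝ) ≤ m := by exact_mod_cast hnm.le
        gcongr
      have h2 := integral_mono (cint (hcont Ts _).abs) (integrable_const _) this
      rw [int_const] at h2
      have : 0 ≤ ε * n := by positivity
      linarith
    · obtain ⟨r, rfl⟩ := Nat.exists_eq_add_of_le hnm
      have h2 := ih r (by omega) (a + m) (fun i hi hib => hTs i (by omega) (by omega))
      have hsplit : ∀ x, ∑ k ∈ Finset.Ico a (a + (m + r)), (f (mapIter Ts k x) - c) =
          ∑ k ∈ Finset.Ico a (a + m), (f (mapIter Ts k x) - c) +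
          ∑ k ∈ Finset.Ico (a + m) (a + m + r), (f (mapIter Ts k x) - c) := by
        intro x
        rw [Finset.sum_Ico_consecutive _ (by omega) (by omega), add_assoc]
      have h1 : ∫ x : Circle1, |∑ k ∈ Finset.Ico a (a + m), (f (mapIter Ts k x) - c)| ≤ ε * m := by
        set Ts' : ℕ → CM lam A := fun i => Ts (a + i) with hTs'
        set H : Circle1 → ℝ := fun y => |∑ j ∈ Finset.range m, (f (mapIter Ts' j y) - c)| with hH
        have e1 : ∀ x, |∑ k ∈ Finset.Ico a (a + m), (f (mapIter Ts k x) - c)| = H (mapIter Ts a x) := by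
          intro x
          rw [hH, Finset.sum_Ico_eq_sum_range, add_tsub_cancel_left]
          simp only [mapIter_add]
          rfl
        simp only [e1]
        set Q : Circle1 → ℝ := fun y => |birkhoffAverage ℝ T.toMap f m y - c| with hQ
        have hQc : Continuous Q := by
          exact ((birk_cont T hf m).sub continuous_const).abs
        have hHQ : ∀ y, H y ≤ m * (ε/2) + m * Q y := by
          intro y
          have e2 : ∑ j ∈ Finset.range m, (f (mapIter Ts' j y) - c) =
            ∑ j ∈ Finset.range m, (f (mapIter Ts' j y) - f (T.toMap^[j] y)) +
              m * (birkhoffAverage ℝ T.toMap f m y - c) := by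
            rw [birkhoffAverage, birkhoffSum, smul_eq_mul, mul_sub,
              mul_inv_cancel_left₀ hm0.ne']
            simp only [Finset.sum_sub_distrib, Finset.sum_const, Finset.card_range, nsmul_eq_mul]
            ring
          rw [hH, hQ]
          simp only
          rw [e2]
          refine (abs_add_le _ _).trans ?_
          rw [abs_mul, Nat.abs_cast]
          gcongr
          refine (Finset.abs_sum_le_sum_abs _ _).trans ?_
          refine (Finset.sum_le_sum (g := fun _ => ε / 2) fun j hj => ?_).trans ?_
          · refine hcl Ts' (fun i hi him x => hTs (a + i) (by omega) (by omega) x) j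
              (Finset.mem_range.1 hj) y
          · simp
        have hstep : ∫ x : Circle1, H (mapIter Ts a x) ≤
            ∫ x : Circle1, (m * (ε/2) + m * Q (mapIter Ts a x)) := by
          apply integral_mono
          · exact cint ((hcont Ts' _).abs.comp (mapIter_cont Ts a))
          · exact cint (continuous_const.add (continuous_const.mul (hQc.comp (mapIter_cont Ts a))))
          · exact fun x => hHQ _
        refine hstep.trans ?_
        have hQi : Integrable (fun x => Q (mapIter Ts a x)) (volume : Measure Circle1) :=
          cint (hQc.comp (mapIter_cont Ts a))
        rw [integral_add (integrable_const _) (hQi.const_mul _),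
          int_const, integral_const_mul]
        have h3 := int_push hlam hA Ts a hQc (fun x => abs_nonneg _)
        rw [← hC] at h3
        have h4 : C * ∫ x : Circle1, Q x ≤ ε / 2 := by
          rw [lt_div_iff₀ (by positivity)] at hm
          linarith
        have : m * ∫ x : Circle1, Q (mapIter Ts a x) ≤ m * (ε/2) := by
          gcongr; exact h3.trans h4
        linarith
      have h3 : ∫ x : Circle1, |∑ k ∈ Finset.Ico a (a + (m + r)), (f (mapIter Ts k x) - c)| ≤
          ∫ x : Circle1, (|∑ k ∈ Finset.Ico a (a + m), (f (mapIter Ts k x) - c)| + 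
            |∑ k ∈ Finset.Ico (a + m) (a + m + r), (f (mapIter Ts k x) - c)|) := by
        apply integral_mono (cint (hcont Ts _).abs)
          ((cint (hcont Ts _).abs).add (cint (hcont Ts _).abs))
        intro x
        simp only
        rw [hsplit]
        exact abs_add_le _ _
      rw [integral_add (cint (hcont Ts _).abs) (cint (hcont Ts _).abs)] at h3
      push_cast
      linarith
  intro a b hab hTs
  obtain ⟨n, rfl⟩ := Nat.exists_eq_add_of_le hab
  have := main n a hTs
  push_cast
  rw [add_sub_cancel_left]
  exact this

theorem mean_cont {lam A : ℝ} (hlam : 1 < lam) (hA : 0 < A) (T : CM lam A) {ρ : Circle1 → ℝ}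
    (hρ : IsSRBDensity T ρ) {f : Circle1 → ℝ} (hf : Continuous f) {ε : ℝ} (hε : 0 < ε) :
    ∃ δ > 0, ∀ (T' : CM lam A) (ρ' : Circle1 → ℝ), IsSRBDensity T' ρ' →
      (∀ x, dist (T'.toMap x) (T.toMap x) ≤ δ) →
      |(∫ y : Circle1, f y * ρ' y) - ∫ y : Circle1, f y * ρ y| ≤ ε := by
  obtain ⟨δ, hδ, N, hN, h⟩ := block hlam hA T hρ hf (show 0 < ε / 3 by positivity)
  refine ⟨δ, hδ, fun T' ρ' hρ' hcl => ?_⟩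
  obtain ⟨M, hM, hM1, hav⟩ := srb_avg hlam hA T' hρ' hf (show 0 < ε / 3 by positivity) ⌈N / (ε/3)⌉₊
  have hMpos : (0:ℝ) < M := by exact_mod_cast hM1
  have hMN : N ≤ (ε/3) * M := by
    have := (Nat.ceil_le.1 hM)
    rw [div_le_iff₀ (by positivity)] at this
    linarith
  have hb := h (fun _ => T') 0 M (Nat.zero_le _) (fun i _ _ => hcl)
  set c := ∫ y : Circle1, f y * ρ y
  set c' := ∫ y : Circle1, f y * ρ' y
  have hQc : Continuous fun y => birkhoffAverage ℝ T'.toMap f M y := birk_cont T' hf M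
  have e : ∀ x, |∑ k ∈ Finset.Ico 0 M, (f (mapIter (fun _ => T') k x) - c)| =
      M * |birkhoffAverage ℝ T'.toMap f M x - c| := by
    intro x
    rw [← abs_of_pos hMpos, ← abs_mul, birkhoffAverage, birkhoffSum, smul_eq_mul,
      mul_sub, mul_inv_cancel_left₀ hMpos.ne']
    simp only [Finset.sum_sub_distrib, Finset.sum_const, Nat.card_Ico, nsmul_eq_mul, mapIter_const,
      Nat.sub_zero, Finset.range_eq_Ico]
  simp only [e] at hb
  rw [integral_const_mul] at hb
  have hb2 : ∫ x : Circle1, |birkhoffAverage ℝ T'.toMap f M x - c| ≤ 2 * (ε / 3) := by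
    apply le_of_mul_le_mul_left _ hMpos
    simp at hb
    linarith
  have i1 : ∀ d : ℝ, Integrable (fun x => |birkhoffAverage ℝ T'.toMap f M x - d|)
      (volume : Measure Circle1) := fun d => cint (hQc.sub continuous_const).abs
  have : ∫ _ : Circle1, |c' - c| ≤ ∫ x : Circle1, (|birkhoffAverage ℝ T'.toMap f M x - c'| +
      |birkhoffAverage ℝ T'.toMap f M x - c|) := by
    apply integral_mono (integrable_const _) ((i1 c').add (i1 c))
    intro x
    show |c' - c| ≤ |birkhoffAverage ℝ T'.toMap f M x - c'| + |birkhoffAverage ℝ T'.toMap f M x - c|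
    rw [abs_sub_comm _ c']
    exact abs_sub_le _ _ _
  rw [int_const, integral_add (i1 c') (i1 c)] at this
  linarith


theorem dist_le_dC1 {lam A : ℝ} (T₁ T₂ : CM lam A) (x : Circle1) :
    dist (T₁.toMap x) (T₂.toMap x) ≤ dC1 T₁ T₂ := by
  have h1 : BddAbove (range fun x : Circle1 => dist (T₁.toMap x) (T₂.toMap x)) :=
    (isCompact_range ((toMap_cont T₁).dist (toMap_cont T₂))).bddAbove
  have h2 := le_ciSup h1 x
  have h3 : 0 ≤ ⨆ x : Circle1, |T₁.dmap x - T₂.dmap x| := Real.iSup_nonneg fun _ => abs_nonneg _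
  unfold dC1
  linarith

theorem arrIter_eq {lam A : ℝ} (Tarr : ℕ → ℕ → CM lam A) (n k : ℕ) :
    arrIter Tarr n k = mapIter (Tarr n) k := by
  induction k with
  | zero => rfl
  | succ k ih => simp only [arrIter, mapIter, ih]

theorem fnk_cont {lam A : ℝ} (Tarr : ℕ → ℕ → CM lam A) {f : Circle1 → ℝ} (hf : Continuous f)
    (n k : ℕ) : Continuous (fnk Tarr f n k) := by
  unfold fnk
  simp only [arrIter_eq]
  exact hf.comp (mapIter_cont _ k)

theorem small_rpow {η : ℝ} (hη : 0 < η) (H : ℝ) {δ : ℝ} (hδ : 0 < δ) :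
    ∃ r > 0, ∀ u, |u| < r → H * |u| ^ η ≤ δ := by
  have hc : Continuous fun u : ℝ => H * |u| ^ η :=
    continuous_const.mul (continuous_abs.rpow_const fun _ => Or.inr hη.le)
  have h0 : (fun u : ℝ => H * |u| ^ η) 0 < δ := by
    simpa [Real.zero_rpow hη.ne'] using hδ
  have := hc.continuousAt.eventually (gt_mem_nhds h0)
  obtain ⟨r, hr, h⟩ := Metric.eventually_nhds_iff.1 this
  exact ⟨r, hr, fun u hu => (h (by simpa [Real.dist_eq] using hu)).le⟩

theorem mean_contOn {lam A : ℝ} (hlam : 1 < lam) (hA : 0 < A) {η : ℝ} (hη : 0 < η)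
    (γ : ℝ → CM lam A) (hγ : HolderCurve η γ) {f : Circle1 → ℝ} (hf : Continuous f)
    (ρhat : ℝ → Circle1 → ℝ) (hρhat : ∀ t ∈ Icc (0 : ℝ) 1, IsSRBDensity (γ t) (ρhat t)) :
    ContinuousOn (fun t => ∫ y : Circle1, f y * ρhat t y) (Icc (0 : ℝ) 1) := by
  obtain ⟨H, hH⟩ := hγ
  rw [Metric.continuousOn_iff]
  intro s hs ε hε
  obtain ⟨δ, hδ, h⟩ := mean_cont hlam hA (γ s) (hρhat s hs) hf (half_pos hε)
  obtain ⟨r, hr, hr'⟩ := small_rpow hη H hδ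
  refine ⟨r, hr, fun t ht hts => ?_⟩
  rw [Real.dist_eq] at hts ⊢
  refine (h (γ t) (ρhat t) (hρhat t ht) fun x => ?_).trans_lt (by linarith)
  exact ((dist_le_dC1 _ _ x).trans (hH t ht s hs)).trans (hr' _ hts)

/-- Increment estimate on `[a,b]`. -/
def Pest {lam A : ℝ} (Tarr : ℕ → ℕ → CM lam A) (f : Circle1 → ℝ) (c : ℝ → ℝ) (ε a b : ℝ) : Prop :=
  ∃ N : ℝ, ∀ᶠ n : ℕ in atTop,
    ∫ x : Circle1, |∑ k ∈ Finset.Ico ⌊(n:ℝ) * a⌋₊ ⌊(n:ℝ) * b⌋₊, fnk Tarr f n k x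
      - n * ∫ s in a..b, c s| ≤ ε * (n * (b - a)) + N

theorem Pest_trans {lam A : ℝ} (Tarr : ℕ → ℕ → CM lam A) {f : Circle1 → ℝ} (hf : Continuous f)
    {c : ℝ → ℝ} (hc : ContinuousOn c (Icc 0 1)) {ε a b d : ℝ} (ha : 0 ≤ a) (hab : a ≤ b)
    (hbd : b ≤ d) (hd : d ≤ 1) (h1 : Pest Tarr f c ε a b) (h2 : Pest Tarr f c ε b d) :
    Pest Tarr f c ε a d := by
  obtain ⟨N1, h1⟩ := h1
  obtain ⟨N2, h2⟩ := h2
  refine ⟨N1 + N2, ?_⟩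
  filter_upwards [h1, h2] with n h1 h2
  have hcont : ∀ (s : Finset ℕ) (v : ℝ), Integrable (fun x => |∑ k ∈ s, fnk Tarr f n k x - v|)
      (volume : Measure Circle1) :=
    fun s v => cint ((continuous_finsetSum _ fun k _ => fnk_cont Tarr hf n k).sub
      continuous_const).abs
  have hint : ∀ u v, 0 ≤ u → u ≤ v → v ≤ 1 → IntervalIntegrable c volume u v := by
    intro u v hu huv hv
    apply ContinuousOn.intervalIntegrable
    rw [uIcc_of_le huv]
    exact hc.mono (Icc_subset_Icc hu hv)
  have hsp : ∫ s in a..d, c s = (∫ s in a..b, c s) + ∫ s in b..d, c s :=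
    (intervalIntegral.integral_add_adjacent_intervals (hint a b ha hab (hbd.trans hd))
      (hint b d (ha.trans hab) hbd hd)).symm
  have hf1 : ⌊(n:ℝ) * a⌋₊ ≤ ⌊(n:ℝ) * b⌋₊ := Nat.floor_le_floor (by gcongr)
  have hf2 : ⌊(n:ℝ) * b⌋₊ ≤ ⌊(n:ℝ) * d⌋₊ := Nat.floor_le_floor (by gcongr)
  have key := integral_mono (hcont (Finset.Ico ⌊(n:ℝ) * a⌋₊ ⌊(n:ℝ) * d⌋₊) (n * ∫ s in a..d, c s))
    ((hcont (Finset.Ico ⌊(n:ℝ) * a⌋₊ ⌊(n:ℝ) * b⌋₊) (n * ∫ s in a..b, c s)).add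
      (hcont (Finset.Ico ⌊(n:ℝ) * b⌋₊ ⌊(n:ℝ) * d⌋₊) (n * ∫ s in b..d, c s))) (by
        intro x
        simp only [Pi.add_apply]
        rw [← Finset.sum_Ico_consecutive _ hf1 hf2, hsp]
        refine le_trans (le_of_eq ?_) (abs_add_le _ _)
        congr 1
        ring)
  rw [integral_add' (hcont _ _) (hcont _ _)] at key
  nlinarith

theorem Pest_local {lam A : ℝ} (hlam : 1 < lam) (hA : 0 < A) {η : ℝ} (hη : 0 < η)
    (γ : ℝ → CM lam A) (hγ : HolderCurve η γ)
    (Tarr : ℕ → ℕ → CM lam A) (hT : ArrayApprox η γ Tarr)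
    {f : Circle1 → ℝ} (hf : Continuous f)
    (ρhat : ℝ → Circle1 → ℝ) (hρhat : ∀ t ∈ Icc (0 : ℝ) 1, IsSRBDensity (γ t) (ρhat t))
    (c : ℝ → ℝ) (hcdef : c = fun t => ∫ y : Circle1, f y * ρhat t y)
    (hc : ContinuousOn c (Icc 0 1)) {ε : ℝ} (hε : 0 < ε) {s : ℝ} (hs : s ∈ Icc (0:ℝ) 1) :
    ∃ r > 0, ∀ a b, 0 ≤ a → a ≤ b → b ≤ 1 → |a - s| < r → |b - s| < r →
      Pest Tarr f c (2 * ε) a b := by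
  obtain ⟨H, hH⟩ := hγ
  obtain ⟨M, hM⟩ := hT
  obtain ⟨δ, hδ, N, hN, hblock⟩ := block hlam hA (γ s) (hρhat s hs) hf hε
  obtain ⟨r1, hr1, h1⟩ := Metric.continuousOn_iff.1 hc s hs ε hε
  obtain ⟨r2, hr2, h2⟩ := small_rpow hη H (half_pos hδ)
  have hcs : (∫ y : Circle1, f y * ρhat s y) = c s := by rw [hcdef]
  rw [hcs] at hblock
  refine ⟨min r1 r2, lt_min hr1 hr2, fun a b ha hab hb has hbs => ⟨ε + N + |c s|, ?_⟩⟩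
  have hbig : ∀ᶠ n : ℕ in atTop, |M| / (δ/2) ≤ (n:ℝ) ^ η :=
    ((tendsto_rpow_atTop hη).comp tendsto_natCast_atTop_atTop).eventually_ge_atTop _
  filter_upwards [hbig, eventually_ge_atTop 1] with n hn hn1
  have hn0 : (0:ℝ) < n := by exact_mod_cast hn1
  have hmid : ∀ t, a ≤ t → t ≤ b → |t - s| < min r1 r2 := by
    intro t h1 h2
    rw [abs_lt] at *
    constructor <;> linarith [has.1, hbs.2]
  have hfl : ⌊(n:ℝ) * a⌋₊ ≤ ⌊(n:ℝ) * b⌋₊ := Nat.floor_le_floor (by gcongr)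
  have hb1 := hblock (Tarr n) _ _ hfl (by
    intro i hi1 hi2 x
    have hi1' : (n:ℝ) * a < i := (Nat.floor_lt (by positivity)).1 hi1
    have hi2' : (i:ℝ) ≤ n * b := (Nat.le_floor_iff (by have := ha.trans hab; positivity)).1 hi2.le
    have ht1 : a ≤ (i:ℝ) / n := by rw [le_div_iff₀ hn0]; linarith
    have ht2 : (i:ℝ) / n ≤ b := by rw [div_le_iff₀ hn0]; linarith
    have ht : (i:ℝ) / n ∈ Icc (0:ℝ) 1 := ⟨ha.trans ht1, ht2.trans hb⟩
    have hMn := hM n hn1 _ ht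
    rw [mul_div_cancel₀ _ hn0.ne', Nat.floor_natCast] at hMn
    have hpow : 0 < (n:ℝ) ^ η := Real.rpow_pos_of_pos hn0 _
    have d1 : dC1 (Tarr n i) (γ ((i:ℝ)/n)) ≤ δ / 2 := by
      rw [div_le_iff₀ (half_pos hδ)] at hn
      exact le_of_mul_le_mul_left ((hMn.trans (le_abs_self M)).trans hn) hpow
    have d2 : dC1 (γ ((i:ℝ)/n)) (γ s) ≤ δ / 2 :=
      (hH _ ht s hs).trans (h2 _ ((hmid _ ht1 ht2).trans_le (min_le_right _ _)))
    have := dist_triangle ((Tarr n i).toMap x) ((γ ((i:ℝ)/n)).toMap x) ((γ s).toMap x)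
    linarith [dist_le_dC1 (Tarr n i) (γ ((i:ℝ)/n)) x, dist_le_dC1 (γ ((i:ℝ)/n)) (γ s) x])
  have hI : |(∫ t in a..b, c t) - c s * (b - a)| ≤ ε * (b - a) := by
    have hci : IntervalIntegrable c volume a b := by
      apply ContinuousOn.intervalIntegrable
      rw [uIcc_of_le hab]
      exact hc.mono (Icc_subset_Icc ha hb)
    have e : (∫ t in a..b, c t) - c s * (b - a) = ∫ t in a..b, (c t - c s) := by
      rw [intervalIntegral.integral_sub hci intervalIntegrable_const,
        intervalIntegral.integral_const, smul_eq_mul, mul_comm]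
    rw [e]
    have := intervalIntegral.norm_integral_le_of_norm_le_const (a := a) (b := b) (C := ε)
      (f := fun t => c t - c s) (by
        intro t ht
        rw [uIoc_of_le hab] at ht
        have := h1 t ⟨ha.trans ht.1.le, ht.2.trans hb⟩ (by
          rw [Real.dist_eq]
          exact (hmid t ht.1.le ht.2).trans_le (min_le_left _ _))
        rw [Real.dist_eq] at this
        exact this.le)
    rwa [Real.norm_eq_abs, abs_of_nonneg (sub_nonneg.2 hab)] at this
  have fa1 := Nat.floor_le (show 0 ≤ (n:ℝ) * a by positivity)
  have fa2 := Nat.lt_floor_add_one ((n:ℝ) * a)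
  have fb1 := Nat.floor_le (show 0 ≤ (n:ℝ) * b by have := ha.trans hab; positivity)
  have fb2 := Nat.lt_floor_add_one ((n:ℝ) * b)
  set p := ⌊(n:ℝ) * a⌋₊
  set q := ⌊(n:ℝ) * b⌋₊
  have hpw : ∀ x, |∑ k ∈ Finset.Ico p q, fnk Tarr f n k x - n * ∫ t in a..b, c t| ≤
      |∑ k ∈ Finset.Ico p q, (f (mapIter (Tarr n) k x) - c s)| + (|c s| + n * (ε * (b - a))) := by
    intro x
    have e : ∑ k ∈ Finset.Ico p q, fnk Tarr f n k x - n * ∫ t in a..b, c t =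
        ∑ k ∈ Finset.Ico p q, (f (mapIter (Tarr n) k x) - c s) +
        (((q:ℝ) - p - n * (b - a)) * c s + n * (c s * (b - a) - ∫ t in a..b, c t)) := by
      simp only [fnk, arrIter_eq, Finset.sum_sub_distrib, Finset.sum_const, Nat.card_Ico,
        nsmul_eq_mul, Nat.cast_sub hfl]
      ring
    rw [e]
    refine (abs_add_le _ _).trans ?_
    gcongr
    refine (abs_add_le _ _).trans ?_
    rw [abs_mul, abs_mul, abs_of_pos hn0, abs_sub_comm (c s * (b - a))]
    gcongr
    have : |(q:ℝ) - p - n * (b - a)| ≤ 1 := by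
      rw [abs_le]; constructor <;> linarith
    calc _ ≤ 1 * |c s| := by gcongr
      _ = _ := one_mul _
  have hcont1 : Continuous fun x => ∑ k ∈ Finset.Ico p q, fnk Tarr f n k x :=
    continuous_finsetSum _ fun k _ => fnk_cont Tarr hf n k
  have hcont2 : Integrable (fun x => |∑ k ∈ Finset.Ico p q, (f (mapIter (Tarr n) k x) - c s)|)
      (volume : Measure Circle1) :=
    cint (continuous_finsetSum _ fun k _ =>
      (hf.comp (mapIter_cont (Tarr n) k)).sub continuous_const).abs
  have key := integral_mono (cint (hcont1.sub continuous_const).abs)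
    (hcont2.add (integrable_const _)) hpw
  rw [integral_add' hcont2 (integrable_const _), int_const] at key
  refine key.trans ?_
  have : ε * ((q:ℝ) - p) ≤ ε * (n * (b - a) + 1) := by
    gcongr; linarith
  linarith

theorem Pest_all {lam A : ℝ} (Tarr : ℕ → ℕ → CM lam A) {f : Circle1 → ℝ} (hf : Continuous f)
    {c : ℝ → ℝ} (hc : ContinuousOn c (Icc 0 1)) {ε : ℝ}
    (hloc : ∀ s ∈ Icc (0:ℝ) 1, ∃ r > 0, ∀ a b, 0 ≤ a → a ≤ b → b ≤ 1 → |a - s| < r → |b - s| < r →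
      Pest Tarr f c ε a b) {t : ℝ} (ht : t ∈ Icc (0:ℝ) 1) : Pest Tarr f c ε 0 t := by
  choose! r hr hloc using hloc
  obtain ⟨τ, h0, hmono, ⟨m, hm⟩, hsub⟩ := exists_monotone_Icc_subset_open_cover_Icc (a := 0) (b := t)
    ht.1 (c := fun s : Icc (0:ℝ) t => {u : Icc (0:ℝ) t | |(u:ℝ) - s| < r s})
    (fun s => isOpen_lt (by fun_prop) continuous_const)
    (fun s _ => mem_iUnion.2 ⟨s, by
      simpa using hr s ⟨s.2.1, s.2.2.trans ht.2⟩⟩)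
  have main : ∀ j, Pest Tarr f c ε 0 (τ j) := by
    intro j
    have hst : ∀ i, Pest Tarr f c ε (τ i) (τ (i+1)) := by
      intro i
      obtain ⟨s, hs⟩ := hsub i
      have hle : τ i ≤ τ (i+1) := hmono (Nat.le_succ i)
      have h1 := hs (left_mem_Icc.2 hle)
      have h2 := hs (right_mem_Icc.2 hle)
      exact hloc s ⟨s.2.1, s.2.2.trans ht.2⟩ _ _ (τ i).2.1 hle ((τ (i+1)).2.2.trans ht.2) h1 h2
    induction j with
    | zero =>
      have hle : τ 0 ≤ τ 1 := hmono (Nat.le_succ 0)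
      rw [h0]
      refine ⟨0, Eventually.of_forall fun n => ?_⟩
      simp
    | succ j ih =>
      exact Pest_trans Tarr hf hc le_rfl (τ j).2.1 (hmono (Nat.le_succ j))
        ((τ (j+1)).2.2.trans ht.2) ih (hst j)
  have := main m
  rw [hm m le_rfl] at this
  exact this


theorem zeta_close {lam A : ℝ} (Tarr : ℕ → ℕ → CM lam A) {f : Circle1 → ℝ} {B : ℝ}
    (hB : ∀ x, |f x| ≤ B) (n : ℕ) (x : Circle1) (t : ℝ) :
    |zetaP Tarr f n x t - (n:ℝ)⁻¹ * ∑ k ∈ Finset.range ⌊(n : ℝ) * t⌋₊, fnk Tarr f n k x|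
      ≤ (n:ℝ)⁻¹ * B := by
  unfold zetaP
  rw [mul_add, add_sub_cancel_left, abs_mul, abs_inv, Nat.abs_cast, abs_mul,
    abs_of_nonneg (Int.fract_nonneg _)]
  gcongr
  have h1 := (Int.fract_lt_one ((n:ℝ) * t)).le
  have h2 := hB (arrIter Tarr n ⌊(n : ℝ) * t⌋₊ x)
  calc _ ≤ 1 * |fnk Tarr f n ⌊(n : ℝ) * t⌋₊ x| := by gcongr
    _ ≤ B := by rw [one_mul]; exact h2

theorem zeta_lip {lam A : ℝ} (Tarr : ℕ → ℕ → CM lam A) {f : Circle1 → ℝ} {B : ℝ}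
    (hB : ∀ x, |f x| ≤ B) (n : ℕ) (hn : 1 ≤ n) (x : Circle1) {a b : ℝ} (ha : 0 ≤ a) (hab : a ≤ b) :
    |zetaP Tarr f n x b - zetaP Tarr f n x a| ≤ B * (b - a) + 3 * ((n:ℝ)⁻¹ * B) := by
  have hB0 : 0 ≤ B := (abs_nonneg _).trans (hB 0)
  have hn0 : (0:ℝ) < n := by exact_mod_cast hn
  have h1 := zeta_close Tarr hB n x a
  have h2 := zeta_close Tarr hB n x b
  have fa2 := Nat.lt_floor_add_one ((n:ℝ) * a)
  have fb1 := Nat.floor_le (show 0 ≤ (n:ℝ) * b by have := ha.trans hab; positivity)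
  have hfl : ⌊(n:ℝ) * a⌋₊ ≤ ⌊(n:ℝ) * b⌋₊ := Nat.floor_le_floor (by gcongr)
  set p := ⌊(n:ℝ) * a⌋₊
  set q := ⌊(n:ℝ) * b⌋₊
  have h3 : |(n:ℝ)⁻¹ * ∑ k ∈ Finset.range q, fnk Tarr f n k x -
      (n:ℝ)⁻¹ * ∑ k ∈ Finset.range p, fnk Tarr f n k x| ≤ B * (b - a) + (n:ℝ)⁻¹ * B := by
    rw [← mul_sub, ← Finset.sum_Ico_eq_sub _ hfl, abs_mul, abs_inv, Nat.abs_cast]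
    have : |∑ k ∈ Finset.Ico p q, fnk Tarr f n k x| ≤ ((q:ℝ) - p) * B := by
      refine (Finset.abs_sum_le_sum_abs _ _).trans ?_
      refine (Finset.sum_le_sum (g := fun _ => B) fun k _ => hB _).trans ?_
      simp [Nat.cast_sub hfl]
    have h5 : ((q:ℝ) - p) * B ≤ (n * (b - a) + 1) * B := by gcongr; linarith
    rw [inv_mul_le_iff₀ hn0, mul_add, mul_inv_cancel_left₀ hn0.ne']
    linarith
  rw [abs_le] at *
  constructor <;> linarith [h1.1, h1.2, h2.1, h2.2, h3.1, h3.2]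

theorem zeta_cont {lam A : ℝ} (Tarr : ℕ → ℕ → CM lam A) {f : Circle1 → ℝ} (hf : Continuous f)
    (n : ℕ) (t : ℝ) : Continuous fun x => zetaP Tarr f n x t := by
  unfold zetaP
  exact continuous_const.mul ((continuous_finsetSum _ fun k _ => fnk_cont Tarr hf n k).add
    (continuous_const.mul (fnk_cont Tarr hf n _)))

theorem path_nhds {g : ℝ → ℝ} (F : BoundedContinuousFunction PathSpace ℝ) {κ : ℝ} (hκ : 0 < κ) :
    ∃ δ > 0, ∀ h : ℝ → ℝ, (∀ t ∈ Icc (0:ℝ) 1, |h t - g t| < δ) →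
      dist (F (pathOf h)) (F (pathOf g)) < κ := by
  have h1 : {ω : PathSpace | dist (F ω) (F (pathOf g)) < κ} ∈ 𝓝 (pathOf g) :=
    F.continuous.continuousAt.eventually (Metric.ball_mem_nhds _ hκ)
  have hb := UniformFun.hasBasis_nhds_of_basis (Icc (0:ℝ) 1) ℝ (pathOf g) Metric.uniformity_basis_dist
  obtain ⟨δ, hδ, h2⟩ := hb.mem_iff.1 h1
  refine ⟨δ, hδ, fun h hh => h2 ?_⟩
  intro t
  show dist (g t) (h t) < δ
  rw [dist_comm, Real.dist_eq]
  exact hh t t.2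

theorem path_cont {lam A : ℝ} (Tarr : ℕ → ℕ → CM lam A) {f : Circle1 → ℝ} (hf : Continuous f)
    (n : ℕ) (F : BoundedContinuousFunction PathSpace ℝ) :
    Continuous fun x => F (pathOf (zetaP Tarr f n x)) := by
  rw [continuous_iff_continuousAt]
  intro x
  rw [Metric.continuousAt_iff']
  intro κ hκ
  obtain ⟨δ, hδ, h⟩ := path_nhds (g := zetaP Tarr f n x) F hκ
  have hc : Continuous fun y => ∑ k ∈ Finset.range (n+1), |fnk Tarr f n k y - fnk Tarr f n k x| :=
    continuous_finsetSum _ fun k _ => ((fnk_cont Tarr hf n k).sub continuous_const).abs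
  have h0 : (fun y => ∑ k ∈ Finset.range (n+1), |fnk Tarr f n k y - fnk Tarr f n k x|) x < δ := by
    simpa using hδ
  filter_upwards [hc.continuousAt.eventually (gt_mem_nhds h0)] with y hy
  apply h
  intro t ht
  refine lt_of_le_of_lt ?_ hy
  have hfl : ⌊(n:ℝ) * t⌋₊ ≤ n := by
    have : (n:ℝ) * t ≤ n := mul_le_of_le_one_right (by positivity) ht.2
    simpa using Nat.floor_le_floor this
  set m := ⌊(n:ℝ) * t⌋₊ with hm
  unfold zetaP
  rw [← hm, ← mul_sub, abs_mul, abs_inv, Nat.abs_cast]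
  have e : |∑ k ∈ Finset.range m, fnk Tarr f n k y + Int.fract ((n:ℝ) * t) * fnk Tarr f n m y -
      (∑ k ∈ Finset.range m, fnk Tarr f n k x + Int.fract ((n:ℝ) * t) * fnk Tarr f n m x)| ≤
      ∑ k ∈ Finset.range (m+1), |fnk Tarr f n k y - fnk Tarr f n k x| := by
    have e1 : ∑ k ∈ Finset.range m, fnk Tarr f n k y + Int.fract ((n:ℝ) * t) * fnk Tarr f n m y -
      (∑ k ∈ Finset.range m, fnk Tarr f n k x + Int.fract ((n:ℝ) * t) * fnk Tarr f n m x) =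
      ∑ k ∈ Finset.range m, (fnk Tarr f n k y - fnk Tarr f n k x) +
        Int.fract ((n:ℝ) * t) * (fnk Tarr f n m y - fnk Tarr f n m x) := by
      rw [Finset.sum_sub_distrib]; ring
    rw [e1, Finset.sum_range_succ]
    refine (abs_add_le _ _).trans (add_le_add (Finset.abs_sum_le_sum_abs _ _) ?_)
    rw [abs_mul, abs_of_nonneg (Int.fract_nonneg _)]
    exact mul_le_of_le_one_left (abs_nonneg _) (Int.fract_lt_one _).le
  have e2 : ∑ k ∈ Finset.range (m+1), |fnk Tarr f n k y - fnk Tarr f n k x| ≤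
      ∑ k ∈ Finset.range (n+1), |fnk Tarr f n k y - fnk Tarr f n k x| :=
    Finset.sum_le_sum_of_subset_of_nonneg (Finset.range_mono (by omega)) fun _ _ _ => abs_nonneg _
  have e3 : (n:ℝ)⁻¹ ≤ 1 := Nat.cast_inv_le_one n
  exact (mul_le_of_le_one_left (abs_nonneg _) e3).trans (e.trans e2)

theorem zeta_L1 {lam A : ℝ} (Tarr : ℕ → ℕ → CM lam A) {f : Circle1 → ℝ} (hf : Continuous f)
    {B : ℝ} (hB : ∀ x, |f x| ≤ B) {c : ℝ → ℝ} {t : ℝ} (ht : t ∈ Icc (0:ℝ) 1)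
    (hP : ∀ ε > 0, Pest Tarr f c ε 0 t) :
    Tendsto (fun n : ℕ => ∫ x : Circle1, |zetaP Tarr f n x t - ∫ s in (0:ℝ)..t, c s|) atTop (𝓝 0) := by
  rw [Metric.tendsto_atTop']
  intro ε hε
  obtain ⟨N, hN⟩ := hP (ε/2) (half_pos hε)
  have hlim : Tendsto (fun n : ℕ => (n:ℝ)⁻¹ * (N + B)) atTop (𝓝 0) := by
    simpa using (tendsto_inv_atTop_nhds_zero_nat (𝕜 := ℝ)).mul_const (N + B)
  have := hN.and ((hlim.eventually (gt_mem_nhds (half_pos hε))).and (eventually_ge_atTop 1))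
  obtain ⟨n0, hev⟩ := eventually_atTop.1 this
  refine ⟨n0, fun n hn => ?_⟩
  obtain ⟨h1, h2, h3⟩ := hev n hn.le
  have hn0 : (0:ℝ) < n := by exact_mod_cast h3
  rw [Real.dist_eq, sub_zero, abs_of_nonneg (integral_nonneg fun _ => abs_nonneg _)]
  simp only [mul_zero, Nat.floor_zero, sub_zero, ← Finset.range_eq_Ico] at h1
  set m := ⌊(n:ℝ) * t⌋₊ with hm
  set I := ∫ s in (0:ℝ)..t, c s
  have i1 : Integrable (fun x => |∑ k ∈ Finset.range m, fnk Tarr f n k x - n * I|)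
      (volume : Measure Circle1) :=
    cint ((continuous_finsetSum _ fun k _ => fnk_cont Tarr hf n k).sub continuous_const).abs
  have key := integral_mono (cint ((zeta_cont Tarr hf n t).sub (continuous_const (y := I))).abs)
    ((i1.const_mul (n:ℝ)⁻¹).add (integrable_const ((n:ℝ)⁻¹ * B))) (by
      intro x
      have h4 := zeta_close Tarr hB n x t
      rw [← hm] at h4
      simp only [Pi.add_apply, Pi.sub_apply]
      have e : (n:ℝ)⁻¹ * |∑ k ∈ Finset.range m, fnk Tarr f n k x - n * I| =
          |(n:ℝ)⁻¹ * ∑ k ∈ Finset.range m, fnk Tarr f n k x - I| := by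
        have hi : (0:ℝ) < (n:ℝ)⁻¹ := inv_pos.2 hn0
        have e' : (n:ℝ)⁻¹ * ∑ k ∈ Finset.range m, fnk Tarr f n k x - I =
            (n:ℝ)⁻¹ * (∑ k ∈ Finset.range m, fnk Tarr f n k x - n * I) := by
          rw [mul_sub, inv_mul_cancel_left₀ hn0.ne']
        rw [e', abs_mul, abs_of_pos hi]
      rw [e, add_comm]
      exact (abs_sub_le _ _ _).trans (add_le_add_left h4 _))
  rw [integral_add' (i1.const_mul _) (integrable_const _), int_const, integral_const_mul] at key
  simp only [Pi.sub_apply] at key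
  have h5 : (n:ℝ)⁻¹ * (∫ x : Circle1, |∑ k ∈ Finset.range m, fnk Tarr f n k x - n * I|) ≤
      (n:ℝ)⁻¹ * (ε / 2 * (n * t) + N) := by gcongr
  have h6 : (n:ℝ)⁻¹ * (ε / 2 * (n * t) + N) = ε / 2 * t + (n:ℝ)⁻¹ * N := by
    field_simp
  have h7 : ε / 2 * t ≤ ε / 2 := mul_le_of_le_one_right (by positivity) ht.2
  linarith

theorem path_meas {lam A : ℝ} (Tarr : ℕ → ℕ → CM lam A) {f : Circle1 → ℝ} (hf : Continuous f)
    {B : ℝ} (hB : ∀ x, |f x| ≤ B) {c : ℝ → ℝ} (hc : ContinuousOn c (Icc 0 1))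
    (hL : ∀ t ∈ Icc (0:ℝ) 1, Tendsto (fun n : ℕ =>
      ∫ x : Circle1, |zetaP Tarr f n x t - ∫ s in (0:ℝ)..t, c s|) atTop (𝓝 0))
    (F : BoundedContinuousFunction PathSpace ℝ) :
    TendstoInMeasure (volume : Measure Circle1) (fun n x => F (pathOf (zetaP Tarr f n x))) atTop
      (fun _ => F (pathOf (fun t => ∫ s in (0:ℝ)..t, c s))) := by
  rw [tendstoInMeasure_iff_dist]
  intro κ hκ
  set Z : ℝ → ℝ := fun t => ∫ s in (0:ℝ)..t, c s with hZ
  obtain ⟨δ, hδ, hF⟩ := path_nhds (g := Z) F hκ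
  obtain ⟨B', hB'⟩ : ∃ B', ∀ t ∈ Icc (0:ℝ) 1, ‖c t‖ ≤ B' :=
    isCompact_Icc.exists_bound_of_continuousOn hc
  have hB0 : 0 ≤ B := (abs_nonneg _).trans (hB 0)
  have hB0' : 0 ≤ B' := (norm_nonneg _).trans (hB' 0 (by simp))
  have hZl : ∀ a b, 0 ≤ a → a ≤ b → b ≤ 1 → |Z b - Z a| ≤ B' * (b - a) := by
    intro a b ha hab hb
    have hint : ∀ v, 0 ≤ v → v ≤ 1 → IntervalIntegrable c volume 0 v := by
      intro v hv hv1
      apply ContinuousOn.intervalIntegrable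
      rw [uIcc_of_le hv]
      exact hc.mono (Icc_subset_Icc le_rfl hv1)
    rw [hZ]
    simp only
    rw [intervalIntegral.integral_interval_sub_left (hint b (ha.trans hab) hb)
      (hint a ha (hab.trans hb))]
    have := intervalIntegral.norm_integral_le_of_norm_le_const (a := a) (b := b) (C := B')
      (f := c) (by
        intro t ht
        rw [uIoc_of_le hab] at ht
        exact hB' t ⟨ha.trans ht.1.le, ht.2.trans hb⟩)
    rwa [Real.norm_eq_abs, abs_of_nonneg (sub_nonneg.2 hab)] at this
  obtain ⟨q, hq⟩ := exists_nat_gt ((B + B') / (δ / 4))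
  have hq0 : (0:ℝ) < q := lt_of_le_of_lt (by positivity) hq
  have hqδ : (B + B') * (1 / q) < δ / 4 := by
    rw [div_lt_iff₀ (by positivity)] at hq
    rw [mul_one_div, div_lt_iff₀ hq0]
    linarith
  set D : ℕ → Circle1 → ℝ := fun n x =>
    ∑ p ∈ Finset.range (q+1), |zetaP Tarr f n x ((p:ℝ)/q) - Z ((p:ℝ)/q)| with hD
  have hDc : ∀ n, Continuous (D n) := fun n => continuous_finsetSum _ fun p _ =>
    ((zeta_cont Tarr hf n _).sub continuous_const).abs
  have hDl : Tendsto (fun n => ∫ x : Circle1, D n x) atTop (𝓝 0) := by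
    have e : ∀ n, ∫ x : Circle1, D n x = ∑ p ∈ Finset.range (q+1),
        ∫ x : Circle1, |zetaP Tarr f n x ((p:ℝ)/q) - Z ((p:ℝ)/q)| := by
      intro n
      exact integral_finsetSum _ fun p _ => cint ((zeta_cont Tarr hf n _).sub continuous_const).abs
    simp only [e]
    rw [show (0:ℝ) = ∑ p ∈ Finset.range (q+1), (0:ℝ) by simp]
    apply tendsto_finsetSum
    intro p hp
    apply hL
    have : (p:ℝ) ≤ q := by exact_mod_cast Nat.lt_succ_iff.1 (Finset.mem_range.1 hp)
    exact ⟨by positivity, (div_le_one hq0).2 this⟩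
  have hlim : Tendsto (fun n : ℕ => 3 * ((n:ℝ)⁻¹ * B)) atTop (𝓝 0) := by
    simpa using ((tendsto_inv_atTop_nhds_zero_nat (𝕜 := ℝ)).mul_const B).const_mul 3
  have hsub : ∀ᶠ n : ℕ in atTop, {x : Circle1 | κ ≤ dist (F (pathOf (zetaP Tarr f n x))) (F (pathOf Z))} ⊆
      {x | δ / 4 ≤ D n x} := by
    filter_upwards [hlim.eventually (gt_mem_nhds (show 0 < δ / 4 by positivity)),
      eventually_ge_atTop 1] with n hn hn1 x hx
    by_contra hcon
    simp only [mem_setOf_eq, not_le] at hx hcon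
    refine absurd (hF (zetaP Tarr f n x) fun t ht => ?_) (not_lt.2 hx)
    have f1 := Nat.floor_le (show 0 ≤ (q:ℝ) * t by have := ht.1; positivity)
    have f2 := Nat.lt_floor_add_one ((q:ℝ) * t)
    have f3 : ⌊(q:ℝ) * t⌋₊ ≤ q := by
      have : (q:ℝ) * t ≤ q := mul_le_of_le_one_right hq0.le ht.2
      simpa using Nat.floor_le_floor this
    set p := ⌊(q:ℝ) * t⌋₊
    have g1 : (p:ℝ) / q ≤ t := by rw [div_le_iff₀ hq0]; linarith
    have g2 : t - (p:ℝ) / q ≤ 1 / q := by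
      rw [sub_le_iff_le_add, ← add_div, le_div_iff₀ hq0]; linarith
    have g0 : 0 ≤ (p:ℝ) / q := by positivity
    have l1 := zeta_lip Tarr hB n hn1 x g0 g1
    have l2 := hZl _ _ g0 g1 ht.2
    have l3 : |zetaP Tarr f n x ((p:ℝ)/q) - Z ((p:ℝ)/q)| ≤ D n x :=
      Finset.single_le_sum (f := fun p : ℕ => |zetaP Tarr f n x ((p:ℝ)/q) - Z ((p:ℝ)/q)|)
        (fun _ _ => abs_nonneg _) (Finset.mem_range.2 (by omega))
    have l4 : B * (t - (p:ℝ)/q) + B' * (t - (p:ℝ)/q) ≤ (B + B') * (1 / q) := by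
      rw [← add_mul]; gcongr
    rw [abs_le] at l1 l2 l3
    rw [abs_lt]
    constructor <;> linarith [l1.1, l1.2, l2.1, l2.2, l3.1, l3.2]
  have hmar : ∀ n, (volume : Measure Circle1) {x | δ / 4 ≤ D n x} ≤
      ENNReal.ofReal ((∫ x : Circle1, D n x) / (δ / 4)) := by
    intro n
    have := mul_meas_ge_le_integral_of_nonneg (μ := (volume : Measure Circle1)) (f := D n)
      (ae_of_all _ fun x => Finset.sum_nonneg fun _ _ => abs_nonneg _) (cint (hDc n)) (δ/4)
    rw [← ofReal_measureReal]
    apply ENNReal.ofReal_le_ofReal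
    rw [le_div_iff₀ (by positivity)]
    linarith
  have hz : Tendsto (fun n => ENNReal.ofReal ((∫ x : Circle1, D n x) / (δ / 4))) atTop (𝓝 0) := by
    have := ENNReal.tendsto_ofReal (hDl.div_const (δ / 4))
    simpa using this
  refine tendsto_of_tendsto_of_tendsto_of_le_of_le' tendsto_const_nhds hz
    (Eventually.of_forall fun _ => zero_le) ?_
  filter_upwards [hsub] with n hn
  exact (measure_mono hn).trans (hmar n)


theorem statement16 {lam Astar : ℝ} (hlam : 1 < lam) (hA : 0 < Astar)
    {η : ℝ} (hη : η ∈ Set.Ioo (0 : ℝ) 1)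
    (γ : ℝ → CM lam Astar) (hγ : HolderCurve η γ)
    (Tarr : ℕ → ℕ → CM lam Astar) (hT : ArrayApprox η γ Tarr)
    (f : Circle1 → ℝ) (hf : ∃ K : NNReal, LipschitzWith K f)
    (ρhat : ℝ → Circle1 → ℝ) (hρhat : ∀ t ∈ Set.Icc (0 : ℝ) 1, IsSRBDensity (γ t) (ρhat t))
    (μ : Measure Circle1) (hμ : IsProbabilityMeasure μ) (hac : μ ≪ volume) :
    ContinuousOn (fun t => ∫ y : Circle1, f y * ρhat t y) (Set.Icc (0 : ℝ) 1) ∧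
    ∀ F : BoundedContinuousFunction PathSpace ℝ,
      Tendsto (fun n : ℕ => ∫ x : Circle1, F (pathOf (zetaP Tarr f n x)) ∂μ)
        atTop
        (𝓝 (F (pathOf (fun t => ∫ s in (0:ℝ)..t, ∫ y : Circle1, f y * ρhat s y)))) := by
  obtain ⟨K, hK⟩ := hf
  have hfc : Continuous f := hK.continuous
  have hcont := mean_contOn hlam hA hη.1 γ hγ hfc ρhat hρhat
  refine ⟨hcont, fun F => ?_⟩
  obtain ⟨B, hB⟩ : ∃ B, ∀ x, |f x| ≤ B := by
    obtain ⟨B, hB⟩ := isCompact_univ.exists_bound_of_continuousOn hfc.continuousOn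
    exact ⟨B, fun x => hB x (mem_univ x)⟩
  have hL : ∀ t ∈ Icc (0:ℝ) 1, Tendsto (fun n : ℕ => ∫ x : Circle1, |zetaP Tarr f n x t -
      ∫ s in (0:ℝ)..t, ∫ y : Circle1, f y * ρhat s y|) atTop (𝓝 0) := by
    intro t ht
    refine zeta_L1 (c := fun s => ∫ y : Circle1, f y * ρhat s y) Tarr hfc hB ht fun ε hε => ?_
    refine Pest_all Tarr hfc hcont (fun s hs => ?_) ht
    have := Pest_local hlam hA hη.1 γ hγ Tarr hT hfc ρhat hρhat _ rfl hcont (half_pos hε) hs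
    rwa [mul_div_cancel₀ ε (two_ne_zero)] at this
  have hmeas := path_meas Tarr hfc hB hcont hL F
  apply tendsto_of_subseq_tendsto
  intro ns hns
  have h1 : TendstoInMeasure (volume : Measure Circle1)
      (fun n x => F (pathOf (zetaP Tarr f (ns n) x))) atTop
      (fun _ => F (pathOf (fun t => ∫ s in (0:ℝ)..t, ∫ y : Circle1, f y * ρhat s y))) :=
    fun ε hε => (hmeas ε hε).comp hns
  obtain ⟨ms, hms, hae⟩ := h1.exists_seq_tendsto_ae
  refine ⟨ms, ?_⟩
  have hae' := hac.ae_le hae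
  have := tendsto_integral_of_dominated_convergence (μ := μ)
    (F := fun n x => F (pathOf (zetaP Tarr f (ns (ms n)) x))) (fun _ => ‖F‖)
    (fun n => (path_cont Tarr hfc _ F).aestronglyMeasurable) (integrable_const _)
    (fun n => ae_of_all _ fun x => F.norm_coe_le_norm _) hae'
  simpa using this
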